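/- arXiv:0712.1514 — 2 statements merged into one kernel-verified Lean document; each statement's English description precedes it below -/
import Mathlib

section
/- There exists a constant C₀ > 0 such that for all b, λ with 0 < b < λ, all rectangles Ω_R = (-R₁/2, R₁/2) × (-R₂/2, R₂/2) with 1 ≤ √b · min(R₁, R₂), and all ε ∈ (0, 1]: (1 - ε)² (b |Ω_R| / 2π) · #{ n ∈ ℕ : (2n+1)b < λ - C₀/(ε · min(R₁,R₂))² } ≤ N(λ; q_b, Ω_R). -/
open MeasureTheory Real Filter

noncomputable section

/-- The upper half-plane ℍ as a subset of ℝ². -/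
def UHP : Set (ℝ × ℝ) := {p : ℝ × ℝ | 0 < p.2}

/-- The hyperbolic measure `dv = y⁻² dx dy` on ℍ. -/
def volH : Measure (ℝ × ℝ) :=
  (volume.restrict UHP).withDensity fun p => ENNReal.ofReal ((p.2 ^ 2)⁻¹)

/-- x-derivative of a complex function on ℝ². -/
def dX (f : ℝ × ℝ → ℂ) (p : ℝ × ℝ) : ℂ := fderiv ℝ f p (1, 0)

/-- y-derivative of a complex function on ℝ². -/
def dY (f : ℝ × ℝ → ℂ) (p : ℝ × ℝ) : ℂ := fderiv ℝ f p (0, 1)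

/-- x-derivative of a real function on ℝ². -/
def dXr (f : ℝ × ℝ → ℝ) (p : ℝ × ℝ) : ℝ := fderiv ℝ f p (1, 0)

/-- y-derivative of a real function on ℝ². -/
def dYr (f : ℝ × ℝ → ℝ) (p : ℝ × ℝ) : ℝ := fderiv ℝ f p (0, 1)

/-- The magnetic field `b̃ = y² (∂ₓA₂ - ∂_yA₁)`. -/
def fieldB (A₁ A₂ : ℝ × ℝ → ℝ) (p : ℝ × ℝ) : ℝ := p.2 ^ 2 * (dXr A₂ p - dYr A₁ p)

/-- The magnetic intensity `b = |b̃|`. -/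
def intenB (A₁ A₂ : ℝ × ℝ → ℝ) (p : ℝ × ℝ) : ℝ := |fieldB A₁ A₂ p|

/-- Smooth compactly supported test functions with support inside a set `Ω`. -/
def IsTestOn (Ω : Set (ℝ × ℝ)) (f : ℝ × ℝ → ℂ) : Prop :=
  ContDiff ℝ (⊤ : ℕ∞) f ∧ HasCompactSupport f ∧ tsupport f ⊆ Ω

/-- The quadratic form of the magnetic Laplacian on ℍ. -/
def qA (A₁ A₂ : ℝ × ℝ → ℝ) (f : ℝ × ℝ → ℂ) : ℝ :=
  ∫ p, p.2 ^ 2 * (‖-Complex.I * dX f p - (A₁ p : ℂ) * f p‖ ^ 2 +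
    ‖-Complex.I * dY f p - (A₂ p : ℂ) * f p‖ ^ 2) ∂volH

/-- hyperbolic distance from `(x,y)` to `(0,1)`. -/
def hDist (p : ℝ × ℝ) : ℝ :=
  2 * Real.arsinh (Real.sqrt (p.1 ^ 2 + (p.2 - 1) ^ 2) / (2 * Real.sqrt p.2))

/-- (H1) : the magnetic intensity tends to +∞ at infinity. -/
def H1 (A₁ A₂ : ℝ × ℝ → ℝ) : Prop :=
  ∀ M : ℝ, ∃ R : ℝ, ∀ p ∈ UHP, R ≤ hDist p → M ≤ intenB A₁ A₂ p

/-- (H2) : control of the derivative of the magnetic field. -/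
def H2 (C₀ : ℝ) (A₁ A₂ : ℝ × ℝ → ℝ) : Prop :=
  ∀ p ∈ UHP, p.2 * Real.sqrt ((dXr (fieldB A₁ A₂) p) ^ 2 + (dYr (fieldB A₁ A₂) p) ^ 2)
    ≤ C₀ * (intenB A₁ A₂ p + 1)

/-- Counting function of a quadratic form `q` with form domain `dom` and squared
norm `nsq`, via Glazman's lemma. -/
def NN (q : (ℝ × ℝ → ℂ) → ℝ) (dom : Set (ℝ × ℝ → ℂ)) (nsq : (ℝ × ℝ → ℂ) → ℝ)
    (lam : ℝ) : ℕ :=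
  sSup {n : ℕ | ∃ V : Submodule ℂ (ℝ × ℝ → ℂ), (V : Set (ℝ × ℝ → ℂ)) ⊆ dom ∧
    Module.finrank ℂ V = n ∧ ∀ u ∈ V, u ≠ 0 → q u < lam * nsq u}

/-- Heaviside function `[ρ]₊⁰`. -/
def heav (ρ : ℝ) : ℝ := if 0 < ρ then 1 else 0


/-- The quadratic form of the Landau Hamiltonian with constant field `b` on ℝ². -/
def qb (b : ℝ) (u : ℝ × ℝ → ℂ) : ℝ :=
  ∫ p : ℝ × ℝ, (‖-Complex.I * dX u p - ((b * p.2 / 2 : ℝ) : ℂ) * u p‖ ^ 2 +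
    ‖-Complex.I * dY u p + ((b * p.1 / 2 : ℝ) : ℂ) * u p‖ ^ 2)

/-- Dirichlet eigenvalue counting function of the Landau Hamiltonian on `Ω`. -/
def NNb (b lam : ℝ) (Ω : Set (ℝ × ℝ)) : ℕ :=
  NN (qb b) {u | IsTestOn Ω u} (fun u => ∫ p : ℝ × ℝ, ‖u p‖ ^ 2) lam

/-- Number of Landau levels below `lam` : `#{n ∈ ℕ : (2n+1)b < lam}`. -/
def landauCount (b lam : ℝ) : ℕ := Nat.card {n : ℕ | (2 * (n : ℝ) + 1) * b < lam}

/-- The open rectangle `(-R₁/2, R₁/2) × (-R₂/2, R₂/2)`. -/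
def rectR (R₁ R₂ : ℝ) : Set (ℝ × ℝ) :=
  Set.Ioo (-R₁ / 2) (R₁ / 2) ×ˢ Set.Ioo (-R₂ / 2) (R₂ / 2)

/-!
In the Landau gauge, a Gaussian times a polynomial of degree at most `n`, centred at height
`2πl/(bL)` and multiplied by the plane wave `exp(2πilx/L)`, has energy at most `(2n+1)b` per period
strip. Take `D` consecutive momenta `l`, which gives a space of dimension `D(n+1)`, and multiply by
a quadratic partition of unity adapted to boxes of size `L × s`. By the IMS localisation formula
the cutoffs cost only `M²/w₁² + M²/w₂²`, where `w₁, w₂` are the widths of the transition layers.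
About `m = 2πD/(bLs)` boxes carry almost all of the mass, and magnetic translations move them all
into the rectangle `Ω`. If the total energy of the `m` pieces is below `λ` times their total mass,
min–max for the direct sum of `m` copies of the Dirichlet form gives `D(n+1) ≤ m N(λ; q_b, Ω)`.
Dividing by `m` and letting `D → ∞` yields `(n+1) bLs/(2π) ≤ N(λ; q_b, Ω)`; finally take
`L = (1-ε)R₁`, `s = (1-ε)R₂` and `wᵢ = εRᵢ/2`.

The supremum defining `N` is finite, so that it is not a junk value: a Poincaré inequality on small
cells bounds the dimension of any space of test functions on which the form is below `λ`.
-/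

section GaussianPolynomials

open Polynomial

variable {b : ℝ}

theorem integrable_eval_mul_exp_neg_mul_sq (hb : 0 < b) (R : ℂ[X]) :
    Integrable fun y : ℝ => R.eval (y : ℂ) * (rexp (-b * y ^ 2) : ℂ) := by
  induction R using Polynomial.induction_on' with
  | add p q hp hq =>
    simp only [eval_add, add_mul]
    exact hp.add hq
  | monomial n a =>
    have hn : (-1 : ℝ) < n := neg_one_lt_zero.trans_le n.cast_nonneg
    refine (((integrable_rpow_mul_exp_neg_mul_sq hb hn).ofReal (𝕜 := ℂ)).const_mul a).congr
      (.of_forall fun y => ?_)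
    simp [eval_monomial, mul_assoc]

/-- The linear functional `R ↦ ∫ R(y) exp(-b y²) dy` on polynomials. -/
def gaussianFunctional (hb : 0 < b) : ℂ[X] →ₗ[ℂ] ℂ where
  toFun R := ∫ y : ℝ, R.eval (y : ℂ) * (rexp (-b * y ^ 2) : ℂ)
  map_add' R S := by
    rw [← integral_add (integrable_eval_mul_exp_neg_mul_sq hb R)
      (integrable_eval_mul_exp_neg_mul_sq hb S)]
    simp only [eval_add, add_mul]
  map_smul' a R := by
    rw [RingHom.id_apply, smul_eq_mul, ← integral_const_mul]
    simp only [eval_smul, smul_eq_mul, mul_assoc]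

theorem gaussianFunctional_C_mul (hb : 0 < b) (a : ℂ) (R : ℂ[X]) :
    gaussianFunctional hb (C a * R) = a * gaussianFunctional hb R := by
  rw [← smul_eq_C_mul, map_smul, smul_eq_mul]

theorem hasDerivAt_eval_mul_exp_neg_mul_sq (c : ℝ) (R : ℂ[X]) (y : ℝ) :
    HasDerivAt (fun y : ℝ => R.eval (y : ℂ) * (rexp (-c * y ^ 2) : ℂ))
      ((derivative R - C (2 * c : ℂ) * (X * R)).eval (y : ℂ) * (rexp (-c * y ^ 2) : ℂ)) y := by
  have h_eval : HasDerivAt (fun y : ℝ => R.eval (y : ℂ)) ((derivative R).eval (y : ℂ)) y :=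
    (R.hasDerivAt (y : ℂ)).comp_ofReal
  have h_exp : HasDerivAt (fun y : ℝ => rexp (-c * y ^ 2))
      (rexp (-c * y ^ 2) * (-c * (2 * y))) y := by
    simpa using (((hasDerivAt_id y).pow 2).const_mul (-c)).exp
  refine (h_eval.mul h_exp.ofReal_comp).congr_deriv ?_
  simp only [eval_sub, eval_mul, eval_C, eval_X]
  push_cast
  ring

theorem gaussianFunctional_derivative (hb : 0 < b) (R : ℂ[X]) :
    gaussianFunctional hb (derivative R) = 2 * b * gaussianFunctional hb (X * R) := by
  have h : gaussianFunctional hb (derivative R - C (2 * b : ℂ) * (X * R)) = 0 :=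
    integral_eq_zero_of_hasDerivAt_of_integrable (hasDerivAt_eval_mul_exp_neg_mul_sq b R)
      (integrable_eval_mul_exp_neg_mul_sq hb _) (integrable_eval_mul_exp_neg_mul_sq hb R)
  rwa [map_sub, gaussianFunctional_C_mul, sub_eq_zero] at h

/-- The creation operator `2bX - d/dX`, adjoint to `d/dX` for the weight `exp(-b y²)`. -/
def creation (b : ℝ) (P : ℂ[X]) : ℂ[X] := C (2 * b : ℂ) * (X * P) - derivative P

theorem gaussianFunctional_creation_mul (hb : 0 < b) (P Q : ℂ[X]) :
    gaussianFunctional hb (creation b P * Q) = gaussianFunctional hb (P * derivative Q) := by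
  have h := gaussianFunctional_derivative hb (P * Q)
  have h_expand : creation b P * Q = C (2 * b : ℂ) * (X * (P * Q)) - derivative P * Q := by
    rw [creation]; ring
  rw [derivative_mul, map_add] at h
  rw [h_expand, map_sub, gaussianFunctional_C_mul, ← h, add_sub_cancel_left]

/-- The polynomial with conjugate coefficients; on the real line it takes conjugate values. -/
def conjPoly (R : ℂ[X]) : ℂ[X] := R.map (starRingEnd ℂ)

theorem eval_conjPoly_ofReal (R : ℂ[X]) (y : ℝ) :
    (conjPoly R).eval (y : ℂ) = starRingEnd ℂ (R.eval (y : ℂ)) := by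
  rw [conjPoly, ← Complex.conj_ofReal, eval_map_apply, Complex.conj_ofReal]

theorem derivative_conjPoly (P : ℂ[X]) : derivative (conjPoly P) = conjPoly (derivative P) :=
  derivative_map P _

theorem conjPoly_X_mul (P : ℂ[X]) : conjPoly (X * P) = X * conjPoly P := by
  simp [conjPoly]

theorem conjPoly_sub_ofReal_mul (P Q : ℂ[X]) (t : ℝ) :
    conjPoly (P - C (t : ℂ) * Q) = conjPoly P - C (t : ℂ) * conjPoly Q := by
  simp [conjPoly]

theorem conjPoly_creation (P : ℂ[X]) : conjPoly (creation b P) = creation b (conjPoly P) := by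
  simp [creation, conjPoly, derivative_map, map_ofNat]

/-- The squared norm of `P` in `L²(ℝ, exp(-b y²) dy)`. -/
def gaussianNormSq (b : ℝ) (P : ℂ[X]) : ℝ := ∫ y : ℝ, ‖P.eval (y : ℂ)‖ ^ 2 * rexp (-b * y ^ 2)

theorem eval_mul_conjPoly_ofReal (P : ℂ[X]) (y : ℝ) :
    (P * conjPoly P).eval (y : ℂ) = ((‖P.eval (y : ℂ)‖ ^ 2 : ℝ) : ℂ) := by
  rw [eval_mul, eval_conjPoly_ofReal, Complex.mul_conj, Complex.normSq_eq_norm_sq]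

theorem gaussianFunctional_mul_conjPoly (hb : 0 < b) (P : ℂ[X]) :
    gaussianFunctional hb (P * conjPoly P) = (gaussianNormSq b P : ℂ) := by
  change ∫ y : ℝ, _ = _
  simp only [gaussianNormSq, ← integral_complex_ofReal, eval_mul_conjPoly_ofReal,
    Complex.ofReal_mul]

theorem gaussianNormSq_nonneg (b : ℝ) (P : ℂ[X]) : 0 ≤ gaussianNormSq b P :=
  integral_nonneg fun y => by positivity

theorem integrable_normSq_eval_mul_exp_neg_mul_sq (hb : 0 < b) (P : ℂ[X]) :
    Integrable fun y : ℝ => ‖P.eval (y : ℂ)‖ ^ 2 * rexp (-b * y ^ 2) := by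
  refine (integrable_eval_mul_exp_neg_mul_sq hb (P * conjPoly P)).re.congr
    (.of_forall fun y => ?_)
  dsimp only
  rw [eval_mul_conjPoly_ofReal, ← Complex.ofReal_mul]
  exact Complex.ofReal_re _

theorem gaussianNormSq_pos (hb : 0 < b) {P : ℂ[X]} (hP : P ≠ 0) : 0 < gaussianNormSq b P := by
  obtain ⟨y, hy⟩ : ∃ y : ℝ, P.eval (y : ℂ) ≠ 0 := by
    by_contra! h
    refine hP (eq_zero_of_infinite_isRoot P
      ((Set.infinite_range_of_injective Complex.ofReal_injective).mono ?_))
    rintro _ ⟨y, rfl⟩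
    exact h y
  exact integral_pos_of_integrable_nonneg_nonzero (x := y) (by fun_prop)
    (integrable_normSq_eval_mul_exp_neg_mul_sq hb P) (fun y => by positivity) (by simpa using hy)

theorem gaussianNormSq_creation (hb : 0 < b) (P : ℂ[X]) :
    gaussianNormSq b (creation b P)
      = gaussianNormSq b (derivative P) + 2 * b * gaussianNormSq b P := by
  have h_commutator : P * derivative (creation b (conjPoly P))
      = C (2 * b : ℂ) * (P * conjPoly P) + creation b (conjPoly (derivative P)) * P := by
    simp only [creation, derivative_sub, derivative_mul, derivative_C, derivative_X,
      derivative_conjPoly]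
    ring
  have h : (gaussianNormSq b (creation b P) : ℂ)
      = gaussianNormSq b (derivative P) + 2 * b * gaussianNormSq b P := by
    rw [← gaussianFunctional_mul_conjPoly hb, conjPoly_creation,
      gaussianFunctional_creation_mul, h_commutator, map_add, gaussianFunctional_C_mul,
      gaussianFunctional_creation_mul, mul_comm (conjPoly _), gaussianFunctional_mul_conjPoly,
      gaussianFunctional_mul_conjPoly, add_comm]
  exact_mod_cast h

theorem gaussianNormSq_creation_derivative_sub (hb : 0 < b) (P : ℂ[X]) (t : ℝ) :
    gaussianNormSq b (creation b (derivative P) - C (t : ℂ) * P)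
      = gaussianNormSq b (creation b (derivative P)) - 2 * t * gaussianNormSq b (derivative P)
        + t ^ 2 * gaussianNormSq b P := by
  have h_cross : gaussianFunctional hb (creation b (derivative P) * conjPoly P)
      = gaussianNormSq b (derivative P) := by
    rw [gaussianFunctional_creation_mul, derivative_conjPoly, gaussianFunctional_mul_conjPoly]
  have h_cross_conj : gaussianFunctional hb (conjPoly (creation b (derivative P)) * P)
      = gaussianNormSq b (derivative P) := by
    rw [conjPoly_creation, gaussianFunctional_creation_mul, mul_comm,
      gaussianFunctional_mul_conjPoly]
  have h_expand (Q : ℂ[X]) :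
      (Q - C (t : ℂ) * P) * conjPoly (Q - C (t : ℂ) * P)
        = Q * conjPoly Q - C (t : ℂ) * (Q * conjPoly P) - C (t : ℂ) * (conjPoly Q * P)
          + C (t : ℂ) * (C (t : ℂ) * (P * conjPoly P)) := by
    rw [conjPoly_sub_ofReal_mul]; ring
  have h : (gaussianNormSq b (creation b (derivative P) - C (t : ℂ) * P) : ℂ)
      = gaussianNormSq b (creation b (derivative P)) - 2 * t * gaussianNormSq b (derivative P)
        + t ^ 2 * gaussianNormSq b P := by
    rw [← gaussianFunctional_mul_conjPoly hb, h_expand]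
    simp only [map_add, map_sub, gaussianFunctional_C_mul, h_cross, h_cross_conj,
      gaussianFunctional_mul_conjPoly]
    ring
  exact_mod_cast h

theorem gaussianNormSq_derivative_le (hb : 0 < b) {n : ℕ} {P : ℂ[X]} (hP : P.natDegree ≤ n) :
    gaussianNormSq b (derivative P) ≤ 2 * b * n * gaussianNormSq b P := by
  induction n generalizing P with
  | zero =>
    simp [derivative_of_natDegree_zero (Nat.le_zero.mp hP), gaussianNormSq]
  | succ n ih =>
    have h_ih := ih ((natDegree_derivative_le P).trans (Nat.sub_le_of_le_add hP))
    set t : ℝ := 2 * b * (n + 1) with ht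
    have ht_pos : 0 < t := by positivity
    have h_creation : gaussianNormSq b (creation b (derivative P))
        ≤ t * gaussianNormSq b (derivative P) := by
      rw [gaussianNormSq_creation hb, ht]
      linarith
    have h_square := gaussianNormSq_nonneg b (creation b (derivative P) - C (t : ℂ) * P)
    rw [gaussianNormSq_creation_derivative_sub hb] at h_square
    have h_mul : 0 ≤ t * (t * gaussianNormSq b P - gaussianNormSq b (derivative P)) := by
      linarith
    push_cast
    exact sub_nonneg.mp (nonneg_of_mul_nonneg_right h_mul ht_pos)

/-- The polynomial `P' - bXP`, for which `(P e^{-by²/2})' = (P' - bXP) e^{-by²/2}`. -/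
def oscillatorDeriv (b : ℝ) (P : ℂ[X]) : ℂ[X] := derivative P - C (b : ℂ) * (X * P)

theorem gaussianNormSq_oscillatorDeriv (hb : 0 < b) (P : ℂ[X]) :
    gaussianNormSq b (oscillatorDeriv b P) + b ^ 2 * gaussianNormSq b (X * P)
      = gaussianNormSq b (derivative P) + b * gaussianNormSq b P := by
  have h_parts := gaussianFunctional_derivative hb (X * (P * conjPoly P))
  have h_derivative : derivative (X * (P * conjPoly P))
      = P * conjPoly P + X * derivative (P * conjPoly P) := by
    simp only [derivative_mul, derivative_X]; ring
  have h_expand : oscillatorDeriv b P * conjPoly (oscillatorDeriv b P)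
      = derivative P * conjPoly (derivative P) - C (b : ℂ) * (X * derivative (P * conjPoly P))
        + C (b : ℂ) * (C (b : ℂ) * (X * (X * (P * conjPoly P)))) := by
    simp only [oscillatorDeriv, conjPoly_sub_ofReal_mul, conjPoly_X_mul, derivative_mul,
      derivative_conjPoly]
    ring
  have h_X : X * P * conjPoly (X * P) = X * (X * (P * conjPoly P)) := by
    rw [conjPoly_X_mul]; ring
  have h : (gaussianNormSq b (oscillatorDeriv b P) : ℂ) + b ^ 2 * gaussianNormSq b (X * P)
      = gaussianNormSq b (derivative P) + b * gaussianNormSq b P := by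
    rw [h_derivative, map_add] at h_parts
    simp only [← gaussianFunctional_mul_conjPoly hb, h_expand, h_X, map_add, map_sub,
      gaussianFunctional_C_mul]
    linear_combination (-(b : ℂ)) * h_parts
  exact_mod_cast h

/-- The energy of `P(y) exp(-b y²/2)` for the harmonic oscillator `-d²/dy² + b² y²`. -/
def oscillatorEnergy (b : ℝ) (P : ℂ[X]) : ℝ :=
  gaussianNormSq b (oscillatorDeriv b P) + b ^ 2 * gaussianNormSq b (X * P)

theorem oscillatorEnergy_le (hb : 0 < b) {n : ℕ} {P : ℂ[X]} (hP : P.natDegree ≤ n) :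
    oscillatorEnergy b P ≤ (2 * n + 1) * b * gaussianNormSq b P := by
  rw [oscillatorEnergy, gaussianNormSq_oscillatorDeriv hb]
  linarith [gaussianNormSq_derivative_le hb hP]

/-- The function `P(y) exp(-b y²/2)`. -/
def polyGaussian (b : ℝ) (P : ℂ[X]) (y : ℝ) : ℂ := P.eval (y : ℂ) * (rexp (-(b / 2) * y ^ 2) : ℂ)

theorem norm_polyGaussian_sq (b : ℝ) (P : ℂ[X]) (y : ℝ) :
    ‖polyGaussian b P y‖ ^ 2 = ‖P.eval (y : ℂ)‖ ^ 2 * rexp (-b * y ^ 2) := by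
  rw [polyGaussian, norm_mul, mul_pow, Complex.norm_real, norm_of_nonneg (exp_nonneg _),
    ← exp_nat_mul]
  congr 2
  push_cast
  ring

theorem hasDerivAt_polyGaussian (b : ℝ) (P : ℂ[X]) (y : ℝ) :
    HasDerivAt (polyGaussian b P) (polyGaussian b (oscillatorDeriv b P) y) y := by
  refine (hasDerivAt_eval_mul_exp_neg_mul_sq (b / 2) P y).congr_deriv ?_
  rw [polyGaussian, oscillatorDeriv, Complex.ofReal_div, Complex.ofReal_ofNat,
    mul_div_cancel₀ _ two_ne_zero]

theorem contDiff_polyGaussian (b : ℝ) (P : ℂ[X]) {n : WithTop ℕ∞} :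
    ContDiff ℝ n (polyGaussian b P) := by
  have h_eval : ContDiff ℝ n fun y : ℝ => P.eval (y : ℂ) := by
    simp only [eval_eq_sum_range]
    exact ContDiff.sum fun i _ => contDiff_const.mul (Complex.ofRealCLM.contDiff.pow i)
  have h_exp : ContDiff ℝ n fun y : ℝ => rexp (-(b / 2) * y ^ 2) := by fun_prop
  exact h_eval.mul (Complex.ofRealCLM.contDiff.comp h_exp)

theorem polyGaussian_X_mul (b : ℝ) (P : ℂ[X]) (y : ℝ) :
    polyGaussian b (X * P) y = y * polyGaussian b P y := by
  simp only [polyGaussian, eval_mul, eval_X, mul_assoc]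

theorem integrable_norm_polyGaussian_sq (hb : 0 < b) (P : ℂ[X]) :
    Integrable fun y => ‖polyGaussian b P y‖ ^ 2 := by
  simpa only [norm_polyGaussian_sq] using integrable_normSq_eval_mul_exp_neg_mul_sq hb P

theorem integral_norm_polyGaussian_sq (b : ℝ) (P : ℂ[X]) :
    ∫ y, ‖polyGaussian b P y‖ ^ 2 = gaussianNormSq b P := by
  simp only [norm_polyGaussian_sq, gaussianNormSq]

end GaussianPolynomials

section Cutoff

/-- A smooth function increasing from `0` on `(-∞, 0]` to `π / 2` on `[1, ∞)`. -/
def transitionAngle (t : ℝ) : ℝ := π / 2 * smoothTransition t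

theorem contDiff_transitionAngle {n : ℕ∞} : ContDiff ℝ n transitionAngle :=
  contDiff_const.mul smoothTransition.contDiff

theorem transitionAngle_of_nonpos {t : ℝ} (h : t ≤ 0) : transitionAngle t = 0 := by
  rw [transitionAngle, smoothTransition.zero_of_nonpos h, mul_zero]

theorem transitionAngle_of_one_le {t : ℝ} (h : 1 ≤ t) : transitionAngle t = π / 2 := by
  rw [transitionAngle, smoothTransition.one_of_one_le h, mul_one]

theorem deriv_transitionAngle_of_nonpos {t : ℝ} (h : t ≤ 0) : deriv transitionAngle t = 0 := by
  refine IsLocalMin.deriv_eq_zero (.of_forall fun s => ?_)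
  rw [transitionAngle_of_nonpos h]
  exact mul_nonneg pi_div_two_pos.le (smoothTransition.nonneg s)

theorem deriv_transitionAngle_of_one_le {t : ℝ} (h : 1 ≤ t) : deriv transitionAngle t = 0 := by
  refine IsLocalMax.deriv_eq_zero (.of_forall fun s => ?_)
  rw [transitionAngle_of_one_le h]
  exact mul_le_of_le_one_right pi_div_two_pos.le (smoothTransition.le_one s)

theorem hasDerivAt_transitionAngle (t : ℝ) :
    HasDerivAt transitionAngle (deriv transitionAngle t) t :=
  (contDiff_transitionAngle.differentiable one_ne_zero t).hasDerivAt

theorem exists_abs_deriv_transitionAngle_le : ∃ M > 0, ∀ t, |deriv transitionAngle t| ≤ M := by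
  have h_cont : Continuous (deriv transitionAngle) :=
    (contDiff_transitionAngle (n := 1)).continuous_deriv le_rfl
  obtain ⟨C, hC⟩ := (isCompact_Icc (a := (0 : ℝ)) (b := 1)).exists_bound_of_continuousOn
    h_cont.continuousOn
  refine ⟨max C 1, by positivity, fun t => ?_⟩
  rcases le_or_gt t 0 with h0 | h0
  · simp [deriv_transitionAngle_of_nonpos h0]
  rcases le_or_gt 1 t with h1 | h1
  · simp [deriv_transitionAngle_of_one_le h1]
  exact (hC t ⟨h0.le, h1.le⟩).trans (le_max_left _ _)

/-- A bump supported in `[0, L + w]`, with transition zones `[0, w]` and `[L, L + w]`. Being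
`sin · cos` of the transition angles, its translates by `L` have squares summing to `1`. -/
def cutoff (w L t : ℝ) : ℝ :=
  sin (transitionAngle (t / w)) * cos (transitionAngle ((t - L) / w))

theorem contDiff_cutoff (w L : ℝ) {n : ℕ∞} : ContDiff ℝ n (cutoff w L) :=
  (contDiff_sin.comp (contDiff_transitionAngle.comp (contDiff_id.div_const w))).mul
    (contDiff_cos.comp
      (contDiff_transitionAngle.comp ((contDiff_id.sub contDiff_const).div_const w)))

@[fun_prop]
theorem continuous_cutoff (w L : ℝ) : Continuous (cutoff w L) :=
  (contDiff_cutoff w L (n := 0)).continuous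

@[fun_prop]
theorem continuous_deriv_cutoff (w L : ℝ) : Continuous (deriv (cutoff w L)) :=
  (contDiff_cutoff w L (n := 1)).continuous_deriv le_rfl

theorem hasDerivAt_cutoff (w L t : ℝ) : HasDerivAt (cutoff w L) (deriv (cutoff w L) t) t :=
  ((contDiff_cutoff w L).differentiable one_ne_zero t).hasDerivAt

theorem deriv_cutoff (w L t : ℝ) :
    deriv (cutoff w L) t
      = cos (transitionAngle (t / w)) * (deriv transitionAngle (t / w) / w)
          * cos (transitionAngle ((t - L) / w))
        + sin (transitionAngle (t / w)) *
          (-sin (transitionAngle ((t - L) / w)) * (deriv transitionAngle ((t - L) / w) / w)) := by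
  have h_left : HasDerivAt (fun t => transitionAngle (t / w))
      (deriv transitionAngle (t / w) * (1 / w)) t :=
    HasDerivAt.comp (h₂ := transitionAngle) t (hasDerivAt_transitionAngle _)
      ((hasDerivAt_id t).div_const w)
  have h_right : HasDerivAt (fun t => transitionAngle ((t - L) / w))
      (deriv transitionAngle ((t - L) / w) * (1 / w)) t :=
    HasDerivAt.comp (h₂ := transitionAngle) t (hasDerivAt_transitionAngle _)
      (((hasDerivAt_id t).sub_const L).div_const w)
  refine (h_left.sin.mul h_right.cos).deriv.trans ?_
  ring

variable {w L t : ℝ}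

theorem cutoff_of_nonpos (hw : 0 < w) (ht : t ≤ 0) : cutoff w L t = 0 := by
  have h : t / w ≤ 0 := div_nonpos_of_nonpos_of_nonneg ht hw.le
  simp [cutoff, transitionAngle_of_nonpos h]

theorem cutoff_of_add_le (hw : 0 < w) (ht : L + w ≤ t) : cutoff w L t = 0 := by
  have h : 1 ≤ (t - L) / w := by rw [le_div_iff₀ hw]; linarith
  simp [cutoff, transitionAngle_of_one_le h]

theorem deriv_cutoff_of_nonpos (hw : 0 < w) (ht : t ≤ 0) : deriv (cutoff w L) t = 0 := by
  have h : t / w ≤ 0 := div_nonpos_of_nonpos_of_nonneg ht hw.le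
  simp [deriv_cutoff, transitionAngle_of_nonpos h, deriv_transitionAngle_of_nonpos h]

theorem deriv_cutoff_of_add_le (hw : 0 < w) (ht : L + w ≤ t) : deriv (cutoff w L) t = 0 := by
  have h : 1 ≤ (t - L) / w := by rw [le_div_iff₀ hw]; linarith
  simp [deriv_cutoff, transitionAngle_of_one_le h, deriv_transitionAngle_of_one_le h]

theorem cutoff_of_le (hw : 0 < w) (ht : t ≤ L) :
    cutoff w L t = sin (transitionAngle (t / w)) := by
  have h : (t - L) / w ≤ 0 := div_nonpos_of_nonpos_of_nonneg (by linarith) hw.le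
  simp [cutoff, transitionAngle_of_nonpos h]

theorem deriv_cutoff_of_le (hw : 0 < w) (ht : t ≤ L) :
    deriv (cutoff w L) t
      = cos (transitionAngle (t / w)) * (deriv transitionAngle (t / w) / w) := by
  have h : (t - L) / w ≤ 0 := div_nonpos_of_nonpos_of_nonneg (by linarith) hw.le
  simp [deriv_cutoff, transitionAngle_of_nonpos h]

theorem cutoff_add_of_le (hw : 0 < w) (ht : w ≤ t + L) :
    cutoff w L (t + L) = cos (transitionAngle (t / w)) := by
  have h : 1 ≤ (t + L) / w := by rwa [le_div_iff₀ hw, one_mul]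
  simp [cutoff, transitionAngle_of_one_le h]

theorem deriv_cutoff_add_of_le (hw : 0 < w) (ht : w ≤ t + L) :
    deriv (cutoff w L) (t + L)
      = -sin (transitionAngle (t / w)) * (deriv transitionAngle (t / w) / w) := by
  have h : 1 ≤ (t + L) / w := by rwa [le_div_iff₀ hw, one_mul]
  simp [deriv_cutoff, transitionAngle_of_one_le h]

theorem cutoff_sq_add_cutoff_add_sq (hw : 0 < w) (hwL : w ≤ L) (h0 : 0 ≤ t) (h1 : t ≤ L) :
    cutoff w L t ^ 2 + cutoff w L (t + L) ^ 2 = 1 := by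
  rw [cutoff_of_le hw h1, cutoff_add_of_le hw (by linarith), sin_sq_add_cos_sq]

theorem norm_sq_add_norm_sq_of_rotation {s c : ℝ} (d : ℝ) (h : s ^ 2 + c ^ 2 = 1) (α β : ℂ) :
    ‖(s : ℂ) * α + ((c * d : ℝ) : ℂ) * β‖ ^ 2 + ‖(c : ℂ) * α + ((-s * d : ℝ) : ℂ) * β‖ ^ 2
      = ‖α‖ ^ 2 + d ^ 2 * ‖β‖ ^ 2 := by
  simp only [← Complex.normSq_eq_norm_sq, Complex.normSq_apply, Complex.add_re, Complex.mul_re,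
    Complex.add_im, Complex.mul_im, Complex.ofReal_re, Complex.ofReal_im]
  linear_combination (α.re ^ 2 + α.im ^ 2 + d ^ 2 * (β.re ^ 2 + β.im ^ 2)) * h

/-- The cross terms of the two squares cancel: this is the IMS localisation formula for the
partition of unity formed by the translates of `cutoff w L`. -/
theorem norm_cutoff_mul_add_deriv_sq_add_le (hw : 0 < w) (hwL : w ≤ L) {M : ℝ}
    (hM : ∀ t, |deriv transitionAngle t| ≤ M) (h0 : 0 ≤ t) (h1 : t ≤ L) (α β : ℂ) :
    ‖(cutoff w L t : ℂ) * α + ((deriv (cutoff w L) t : ℝ) : ℂ) * β‖ ^ 2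
        + ‖(cutoff w L (t + L) : ℂ) * α + ((deriv (cutoff w L) (t + L) : ℝ) : ℂ) * β‖ ^ 2
      ≤ ‖α‖ ^ 2 + (M / w) ^ 2 * ‖β‖ ^ 2 := by
  have h_add : w ≤ t + L := by linarith
  rw [cutoff_of_le hw h1, cutoff_add_of_le hw h_add, deriv_cutoff_of_le hw h1,
    deriv_cutoff_add_of_le hw h_add, norm_sq_add_norm_sq_of_rotation _ (sin_sq_add_cos_sq _)]
  have h_deriv : (deriv transitionAngle (t / w) / w) ^ 2 ≤ (M / w) ^ 2 := by
    refine sq_le_sq' ?_ ?_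
    · rw [← neg_div]
      exact div_le_div_of_nonneg_right (abs_le.mp (hM _)).1 hw.le
    · exact div_le_div_of_nonneg_right (abs_le.mp (hM _)).2 hw.le
  gcongr

theorem sum_translates_le_self {F : ℝ → ℝ} (hL : 0 ≤ L) (hF : ∀ t, 0 ≤ F t)
    (h_left : ∀ t ≤ 0, F t = 0) (m : ℕ) {z : ℝ} (hz : z ≤ L) :
    ∑ j ∈ Finset.range m, F (z - j * L) ≤ F z := by
  cases m with
  | zero => simpa using hF z
  | succ m =>
    rw [Finset.sum_range_succ', Finset.sum_eq_zero fun j _ => h_left _ ?_]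
    · simp
    · push_cast
      linarith [mul_nonneg j.cast_nonneg hL]

theorem sum_translates_le {F : ℝ → ℝ} {c : ℝ} (hL : 0 ≤ L) (hF : ∀ t, 0 ≤ F t)
    (h_left : ∀ t ≤ 0, F t = 0) (h_right : ∀ t, 2 * L ≤ t → F t = 0)
    (h_pair : ∀ t, 0 ≤ t → t ≤ L → F t + F (t + L) ≤ c) (m : ℕ) (z : ℝ) :
    ∑ j ∈ Finset.range m, F (z - j * L) ≤ c := by
  rcases le_or_gt z L with hzL | hzL
  · refine (sum_translates_le_self hL hF h_left m hzL).trans ?_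
    rcases le_total z 0 with hz0 | hz0
    · rw [h_left z hz0]
      linarith [h_pair 0 le_rfl hL, hF 0, hF (0 + L)]
    · linarith [h_pair z hz0 hzL, hF (z + L)]
  induction m generalizing z with
  | zero => simpa using (add_nonneg (hF 0) (hF (0 + L))).trans (h_pair 0 le_rfl hL)
  | succ m ih =>
    have h_shift (j : ℕ) : z - ((j + 1 : ℕ) : ℝ) * L = z - L - j * L := by push_cast; ring
    simp only [Finset.sum_range_succ', h_shift, Nat.cast_zero, zero_mul, sub_zero]
    rcases le_or_gt (z - L) L with hz | hz
    · have h_tail := sum_translates_le_self hL hF h_left m hz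
      have h_two := h_pair (z - L) (by linarith) hz
      rw [sub_add_cancel] at h_two
      linarith
    · rw [h_right z (by linarith), add_zero]
      exact ih (z - L) hz

theorem sum_norm_cutoff_mul_add_deriv_sq_le (hw : 0 < w) (hwL : w ≤ L) {M : ℝ}
    (hM : ∀ t, |deriv transitionAngle t| ≤ M) (m : ℕ) (z : ℝ) (α β : ℂ) :
    ∑ j ∈ Finset.range m,
        ‖(cutoff w L (z - j * L) : ℂ) * α + ((deriv (cutoff w L) (z - j * L) : ℝ) : ℂ) * β‖ ^ 2
      ≤ ‖α‖ ^ 2 + (M / w) ^ 2 * ‖β‖ ^ 2 := by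
  refine sum_translates_le (F := fun t => ‖(cutoff w L t : ℂ) * α
    + ((deriv (cutoff w L) t : ℝ) : ℂ) * β‖ ^ 2) (hw.le.trans hwL) (fun _ => sq_nonneg _)
    (fun t ht => ?_) (fun t ht => ?_)
    (fun t h0 h1 => norm_cutoff_mul_add_deriv_sq_add_le hw hwL hM h0 h1 α β) m z
  · simp [cutoff_of_nonpos hw ht, deriv_cutoff_of_nonpos hw ht]
  · have ht' : L + w ≤ t := by linarith
    simp [cutoff_of_add_le hw ht', deriv_cutoff_of_add_le hw ht']

theorem cutoff_sq (hw : 0 < w) (hwL : w ≤ L) (t : ℝ) :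
    cutoff w L t ^ 2
      = sin (transitionAngle (t / w)) ^ 2 - sin (transitionAngle ((t - L) / w)) ^ 2 := by
  rcases le_total t L with h | h
  · rw [cutoff_of_le hw h,
      transitionAngle_of_nonpos (div_nonpos_of_nonpos_of_nonneg (sub_nonpos.mpr h) hw.le)]
    simp
  · rw [cutoff, transitionAngle_of_one_le ((one_le_div hw).mpr (hwL.trans h)), sin_pi_div_two,
      one_mul, one_pow, cos_sq']

theorem sum_cutoff_sq (hw : 0 < w) (hwL : w ≤ L) (m : ℕ) (z : ℝ) :
    ∑ j ∈ Finset.range m, cutoff w L (z - j * L) ^ 2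
      = sin (transitionAngle (z / w)) ^ 2 - sin (transitionAngle ((z - m * L) / w)) ^ 2 := by
  have h_shift (j : ℕ) : z - j * L - L = z - ((j + 1 : ℕ) : ℝ) * L := by push_cast; ring
  simp only [cutoff_sq hw hwL, h_shift]
  rw [Finset.sum_range_sub' fun j : ℕ => sin (transitionAngle ((z - j * L) / w)) ^ 2]
  simp

theorem sum_cutoff_sq_le_one (hw : 0 < w) (hwL : w ≤ L) (m : ℕ) (z : ℝ) :
    ∑ j ∈ Finset.range m, cutoff w L (z - j * L) ^ 2 ≤ 1 := by
  rw [sum_cutoff_sq hw hwL]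
  exact (sub_le_self _ (sq_nonneg _)).trans (sin_sq_le_one _)

theorem sum_cutoff_sq_eq_one (hw : 0 < w) (hwL : w ≤ L) {m : ℕ} {z : ℝ} (h1 : w ≤ z)
    (h2 : z ≤ m * L) : ∑ j ∈ Finset.range m, cutoff w L (z - j * L) ^ 2 = 1 := by
  rw [sum_cutoff_sq hw hwL, transitionAngle_of_one_le ((one_le_div hw).mpr h1),
    transitionAngle_of_nonpos (div_nonpos_of_nonpos_of_nonneg (sub_nonpos.mpr h2) hw.le)]
  simp

theorem integral_eq_integral_two_periods (hL : 0 ≤ L) {H : ℝ → ℝ} (hH : Continuous H)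
    (h_left : ∀ t ≤ 0, H t = 0) (h_right : ∀ t, 2 * L ≤ t → H t = 0) :
    ∫ t, H t = ∫ t in (0 : ℝ)..L, (H t + H (t + L)) := by
  have h_support : ∫ t, H t = ∫ t in (0 : ℝ)..(2 * L), H t := by
    rw [intervalIntegral.integral_of_le (by linarith),
      setIntegral_eq_integral_of_forall_compl_eq_zero]
    intro t ht
    rw [Set.mem_Ioc, not_and_or, not_lt, not_le] at ht
    exact ht.elim (h_left t) fun h => h_right t h.le
  have h_shift : ∫ t in (0 : ℝ)..L, H (t + L) = ∫ t in L..(2 * L), H t := by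
    rw [intervalIntegral.integral_comp_add_right, zero_add, two_mul]
  have h_int (a c : ℝ) : IntervalIntegrable H volume a c := hH.intervalIntegrable a c
  rw [h_support, intervalIntegral.integral_add (h_int _ _)
    ((show Continuous fun t => H (t + L) by fun_prop).intervalIntegrable _ _), h_shift,
    intervalIntegral.integral_add_adjacent_intervals (h_int _ _) (h_int _ _)]

theorem integral_cutoff_sq_mul_periodic (hw : 0 < w) (hwL : w ≤ L) {α : ℝ → ℂ}
    (hα : Continuous α) (hα_per : Function.Periodic α L) :
    ∫ t, cutoff w L t ^ 2 * ‖α t‖ ^ 2 = ∫ t in (0 : ℝ)..L, ‖α t‖ ^ 2 := by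
  have hL : 0 ≤ L := hw.le.trans hwL
  rw [integral_eq_integral_two_periods hL (by fun_prop)
    (fun t ht => by simp [cutoff_of_nonpos hw ht])
    (fun t ht => by simp [cutoff_of_add_le hw (show L + w ≤ t by linarith)])]
  refine intervalIntegral.integral_congr fun t ht => ?_
  rw [Set.uIcc_of_le hL] at ht
  simp only [hα_per t]
  rw [← add_mul, cutoff_sq_add_cutoff_add_sq hw hwL ht.1 ht.2, one_mul]

theorem integral_norm_cutoff_mul_add_deriv_sq_le (hw : 0 < w) (hwL : w ≤ L) {M : ℝ}
    (hM : ∀ t, |deriv transitionAngle t| ≤ M) {α β : ℝ → ℂ} (hα : Continuous α)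
    (hα_per : Function.Periodic α L) (hβ : Continuous β) (hβ_per : Function.Periodic β L) :
    ∫ t, ‖(cutoff w L t : ℂ) * α t + ((deriv (cutoff w L) t : ℝ) : ℂ) * β t‖ ^ 2
      ≤ ∫ t in (0 : ℝ)..L, (‖α t‖ ^ 2 + (M / w) ^ 2 * ‖β t‖ ^ 2) := by
  have hL : 0 ≤ L := hw.le.trans hwL
  rw [integral_eq_integral_two_periods hL (by fun_prop)
    (fun t ht => by simp [cutoff_of_nonpos hw ht, deriv_cutoff_of_nonpos hw ht])
    (fun t ht => by
      have ht' : L + w ≤ t := by linarith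
      simp [cutoff_of_add_le hw ht', deriv_cutoff_of_add_le hw ht'])]
  refine intervalIntegral.integral_mono_on hL (Continuous.intervalIntegrable (by fun_prop) _ _)
    (Continuous.intervalIntegrable (by fun_prop) _ _) fun t ht => ?_
  rw [hα_per t, hβ_per t]
  exact norm_cutoff_mul_add_deriv_sq_add_le hw hwL hM ht.1 ht.2 _ _

end Cutoff

section NegativeSubspaces

variable {E F ι : Type*} [AddCommGroup E] [Module ℂ E] [AddCommGroup F] [Module ℂ F] [Fintype ι]
  {B : E →ₗ⋆[ℂ] E →ₗ[ℂ] ℂ} {V : Submodule ℂ E}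

/-- The subspace `V` is negative for the sesquilinear form `B`. -/
def IsNegOn (B : E →ₗ⋆[ℂ] E →ₗ[ℂ] ℂ) (V : Submodule ℂ E) : Prop :=
  ∀ v ∈ V, v ≠ 0 → (B v v).re < 0

theorem IsNegOn.sup_span_singleton (hB : B.IsSymm) (hV : IsNegOn B V) {u : E}
    (hu : (B u u).re < 0) (h_orth : ∀ v ∈ V, B v u = 0) :
    IsNegOn B (V ⊔ Submodule.span ℂ {u}) := by
  intro x hx hx0
  obtain ⟨v, hv, y, hy, rfl⟩ := Submodule.mem_sup.mp hx
  obtain ⟨c, rfl⟩ := Submodule.mem_span_singleton.mp hy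
  have h_orth' : B u v = 0 := by rw [← hB.eq v u, h_orth v hv, map_zero]
  have h_expand : (B (v + c • u) (v + c • u)).re = (B v v).re + ‖c‖ ^ 2 * (B u u).re := by
    simp only [map_add, LinearMap.add_apply, LinearMap.map_smulₛₗ, map_smul, LinearMap.smul_apply,
      smul_eq_mul, h_orth v hv, h_orth', mul_zero, add_zero, zero_add]
    rw [← mul_assoc, mul_comm c, ← Complex.normSq_eq_conj_mul_self, Complex.add_re,
      Complex.re_ofReal_mul, Complex.normSq_eq_norm_sq]
  rw [h_expand]
  rcases eq_or_ne v 0 with rfl | hv0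
  · have hc : c ≠ 0 := by rintro rfl; simp at hx0
    simpa using mul_neg_of_pos_of_neg (by positivity : 0 < ‖c‖ ^ 2) hu
  · exact add_neg_of_neg_of_nonpos (hV v hv hv0)
      (mul_nonpos_of_nonneg_of_nonpos (sq_nonneg _) hu.le)

theorem IsNegOn.exists_orthogonal_neg [FiniteDimensional ℂ V] {W : ι → F →ₗ[ℂ] E}
    (hW : ∀ c ≠ 0, ∑ i, (B (W i c) (W i c)).re < 0)
    (hlt : Fintype.card ι * Module.finrank ℂ V < Module.finrank ℂ F) :
    ∃ u : E, (B u u).re < 0 ∧ ∀ v ∈ V, B v u = 0 := by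
  have : FiniteDimensional ℂ F := FiniteDimensional.of_finrank_pos (by omega)
  let e := Module.finBasis ℂ V
  let pairings : F →ₗ[ℂ] ι × Fin (Module.finrank ℂ V) → ℂ :=
    LinearMap.pi fun ik => (B (e ik.2)).comp (W ik.1)
  have h_ker : pairings.ker ≠ ⊥ :=
    LinearMap.ker_ne_bot_of_finrank_lt (by simpa [Fintype.card_prod] using hlt)
  obtain ⟨c, hc, hc0⟩ := Submodule.exists_mem_ne_zero_of_ne_bot h_ker
  obtain ⟨i, -, hi⟩ := Finset.exists_lt_of_sum_lt
    (show ∑ i, (B (W i c) (W i c)).re < ∑ _i : ι, (0 : ℝ) by simpa using hW c hc0)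
  refine ⟨W i c, hi, fun v hv => ?_⟩
  have h_zero : (B.flip (W i c)).comp V.subtype = 0 :=
    e.ext fun k => congrFun (LinearMap.mem_ker.mp hc) (i, k)
  exact LinearMap.congr_fun h_zero ⟨v, hv⟩

theorem IsNegOn.exists_finrank_lt (hB : B.IsSymm) [FiniteDimensional ℂ V] (hV : IsNegOn B V)
    {W : ι → F →ₗ[ℂ] E} (hW : ∀ c ≠ 0, ∑ i, (B (W i c) (W i c)).re < 0)
    (hlt : Fintype.card ι * Module.finrank ℂ V < Module.finrank ℂ F) :
    ∃ V' : Submodule ℂ E, FiniteDimensional ℂ V' ∧ IsNegOn B V' ∧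
      Module.finrank ℂ V < Module.finrank ℂ V' := by
  obtain ⟨u, hu, h_orth⟩ := IsNegOn.exists_orthogonal_neg hW hlt
  refine ⟨V ⊔ Submodule.span ℂ {u}, inferInstance, hV.sup_span_singleton hB hu h_orth,
    Submodule.finrank_lt_finrank_of_lt (left_lt_sup.mpr fun h_le => ?_)⟩
  have h_self := h_orth u (h_le (Submodule.mem_span_singleton_self u))
  simp [h_self] at hu

theorem exists_isNegOn_lt_finrank (hB : B.IsSymm) {W : ι → F →ₗ[ℂ] E}
    (hW : ∀ c ≠ 0, ∑ i, (B (W i c) (W i c)).re < 0) {n : ℕ}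
    (hn : Fintype.card ι * n < Module.finrank ℂ F) :
    ∃ V : Submodule ℂ E, FiniteDimensional ℂ V ∧ IsNegOn B V ∧ n < Module.finrank ℂ V := by
  induction n with
  | zero =>
    have h_bot : IsNegOn B (⊥ : Submodule ℂ E) :=
      fun v hv hv0 => absurd ((Submodule.mem_bot ℂ).mp hv) hv0
    obtain ⟨V, hV_fin, hV, h_rank⟩ := h_bot.exists_finrank_lt hB hW (by simpa using hn)
    exact ⟨V, hV_fin, hV, by simpa using h_rank⟩
  | succ n ih =>
    obtain ⟨V, hV_fin, hV, h_rank⟩ := ih (lt_of_le_of_lt (by gcongr; omega) hn)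
    rcases eq_or_lt_of_le (Nat.succ_le_of_lt h_rank) with h_eq | h_lt
    · obtain ⟨V', hV'_fin, hV', h_rank'⟩ := hV.exists_finrank_lt hB hW (h_eq ▸ hn)
      exact ⟨V', hV'_fin, hV', by omega⟩
    · exact ⟨V, hV_fin, hV, h_lt⟩

end NegativeSubspaces

section MagneticForm

variable {Ω : Set (ℝ × ℝ)} {b lam : ℝ} {u v : ℝ × ℝ → ℂ}

theorem IsTestOn.differentiable (hu : IsTestOn Ω u) : Differentiable ℝ u :=
  hu.1.differentiable (by simp)

theorem IsTestOn.continuous_fderiv_apply (hu : IsTestOn Ω u) (h : ℝ × ℝ) :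
    Continuous fun p => fderiv ℝ u p h :=
  (hu.1.continuous_fderiv (by simp)).clm_apply continuous_const

theorem IsTestOn.hasCompactSupport_fderiv_apply (hu : IsTestOn Ω u) (h : ℝ × ℝ) :
    HasCompactSupport fun p => fderiv ℝ u p h :=
  hu.2.1.fderiv_apply ℝ h

variable (Ω) in
/-- The space `C₀^∞(Ω; ℂ)` of test functions. -/
def testSubmodule : Submodule ℂ (ℝ × ℝ → ℂ) where
  carrier := {u | IsTestOn Ω u}
  zero_mem' := ⟨contDiff_const, HasCompactSupport.zero, by simp [tsupport]⟩
  add_mem' := fun {u v} hu hv => ⟨hu.1.add hv.1, hu.2.1.add hv.2.1,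
    (tsupport_add u v).trans (Set.union_subset hu.2.2 hv.2.2)⟩
  smul_mem' := fun c u hu => ⟨contDiff_const.smul hu.1, hu.2.1.smul_left (f := fun _ => c),
    (tsupport_smul_subset_right (fun _ => c) u).trans hu.2.2⟩

/-- The magnetic derivative `-i∂_h - a` in the direction `h`. -/
def magDeriv (h : ℝ × ℝ) (a : ℝ × ℝ → ℝ) (u : ℝ × ℝ → ℂ) (p : ℝ × ℝ) : ℂ :=
  -Complex.I * fderiv ℝ u p h - (a p : ℂ) * u p

theorem qb_eq_integral (b : ℝ) (u : ℝ × ℝ → ℂ) :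
    qb b u = ∫ p, (‖magDeriv (1, 0) (fun p => b * p.2 / 2) u p‖ ^ 2
      + ‖magDeriv (0, 1) (fun p => -(b * p.1 / 2)) u p‖ ^ 2) := by
  simp only [qb, magDeriv, dX, dY, Complex.ofReal_neg, neg_mul, sub_neg_eq_add]

theorem IsTestOn.memLp (hu : IsTestOn Ω u) : MemLp u 2 :=
  hu.1.continuous.memLp_of_hasCompactSupport hu.2.1

theorem IsTestOn.memLp_magDeriv (hu : IsTestOn Ω u) (h : ℝ × ℝ) {a : ℝ × ℝ → ℝ}
    (ha : Continuous a) : MemLp (magDeriv h a u) 2 :=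
  Continuous.memLp_of_hasCompactSupport
    ((continuous_const.mul (hu.continuous_fderiv_apply h)).sub
      ((Complex.continuous_ofReal.comp ha).mul hu.1.continuous))
    ((hu.hasCompactSupport_fderiv_apply h).mul_left.sub hu.2.1.mul_left)

variable (Ω) in
/-- `magDeriv` as a linear map on test functions. -/
def magDerivLinear (h : ℝ × ℝ) (a : ℝ × ℝ → ℝ) : testSubmodule Ω →ₗ[ℂ] ℝ × ℝ → ℂ where
  toFun u := magDeriv h a u
  map_add' u v := by
    ext p
    simp only [magDeriv, Submodule.coe_add, Pi.add_apply,
      fderiv_add (IsTestOn.differentiable u.2 p) (IsTestOn.differentiable v.2 p), add_apply]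
    ring
  map_smul' c u := by
    ext p
    simp only [magDeriv, Submodule.coe_smul, Pi.smul_apply, smul_eq_mul, RingHom.id_apply,
      fderiv_const_smul (IsTestOn.differentiable u.2 p) c, smul_apply]
    ring

theorem memLp_magDerivLinear (h : ℝ × ℝ) {a : ℝ × ℝ → ℝ} (ha : Continuous a)
    (u : testSubmodule Ω) : MemLp (magDerivLinear Ω h a u) 2 :=
  IsTestOn.memLp_magDeriv u.2 h ha

theorem memLp_testSubmodule_subtype (u : testSubmodule Ω) : MemLp ((testSubmodule Ω).subtype u) 2 :=
  IsTestOn.memLp u.2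

section PullbackInner

variable {E α : Type*} [AddCommGroup E] [Module ℂ E] [MeasurableSpace α] {μ : Measure α}
  (T : E →ₗ[ℂ] α → ℂ) (hT : ∀ u, MemLp (T u) 2 μ)

/-- A linear map into square-integrable functions, as a linear map into `L²`. -/
def toL2 : E →ₗ[ℂ] Lp ℂ 2 μ where
  toFun u := (hT u).toLp
  map_add' u v := by simp only [map_add]; exact MemLp.toLp_add (hT u) (hT v)
  map_smul' c u := by simp only [map_smul]; exact MemLp.toLp_const_smul c (hT u)

/-- The pull-back of the `L²` inner product along a linear map into square-integrable functions. -/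
def pullbackInner : E →ₗ⋆[ℂ] E →ₗ[ℂ] ℂ := ((innerₛₗ ℂ).comp (toL2 T hT)).compl₂ (toL2 T hT)

theorem pullbackInner_conj_symm (u v : E) :
    starRingEnd ℂ (pullbackInner T hT u v) = pullbackInner T hT v u :=
  inner_conj_symm (toL2 T hT v) (toL2 T hT u)

theorem re_pullbackInner_self (u : E) :
    (pullbackInner T hT u u).re = ∫ x, ‖T u x‖ ^ 2 ∂μ := by
  have h : pullbackInner T hT u u = ∫ x, ((‖T u x‖ ^ 2 : ℝ) : ℂ) ∂μ := by
    refine (L2.inner_def _ _).trans (integral_congr_ae ?_)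
    filter_upwards [(hT u).coeFn_toLp] with x hx
    change inner ℂ ((hT u).toLp (T u) x) ((hT u).toLp (T u) x) = _
    rw [hx, inner_self_eq_norm_sq_to_K]
    push_cast
    rfl
  rw [h, integral_complex_ofReal, Complex.ofReal_re]

end PullbackInner

variable (Ω b lam) in
/-- The sesquilinear form `q_b(u, v) - lam ⟨u, v⟩` on test functions. -/
def landauForm : testSubmodule Ω →ₗ⋆[ℂ] testSubmodule Ω →ₗ[ℂ] ℂ :=
  pullbackInner (magDerivLinear Ω (1, 0) fun p => b * p.2 / 2)
      (memLp_magDerivLinear _ (by fun_prop))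
    + pullbackInner (magDerivLinear Ω (0, 1) fun p => -(b * p.1 / 2))
      (memLp_magDerivLinear _ (by fun_prop))
    - (lam : ℂ) • pullbackInner (testSubmodule Ω).subtype memLp_testSubmodule_subtype

theorem landauForm_isSymm : (landauForm Ω b lam).IsSymm :=
  ⟨fun u v => by
    simp only [landauForm, LinearMap.sub_apply, LinearMap.add_apply, LinearMap.smul_apply,
      smul_eq_mul, map_sub, map_add, map_mul, pullbackInner_conj_symm, Complex.conj_ofReal]⟩

theorem IsTestOn.integrable_norm_magDeriv_sq (hu : IsTestOn Ω u) (h : ℝ × ℝ) {a : ℝ × ℝ → ℝ}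
    (ha : Continuous a) : Integrable fun p => ‖magDeriv h a u p‖ ^ 2 :=
  (hu.memLp_magDeriv h ha).integrable_norm_pow two_ne_zero

theorem re_landauForm_self (u : testSubmodule Ω) :
    (landauForm Ω b lam u u).re = qb b u - lam * ∫ p, ‖(u : ℝ × ℝ → ℂ) p‖ ^ 2 := by
  rw [qb_eq_integral, integral_add (IsTestOn.integrable_norm_magDeriv_sq u.2 _ (by fun_prop))
    (IsTestOn.integrable_norm_magDeriv_sq u.2 _ (by fun_prop))]
  simp only [landauForm, LinearMap.sub_apply, LinearMap.add_apply, LinearMap.smul_apply,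
    smul_eq_mul, Complex.sub_re, Complex.add_re, Complex.re_ofReal_mul, re_pullbackInner_self]
  rfl

/-- The dimensions of the spaces of test functions on `Ω` with `q_b(u) < lam ‖u‖²` for `u ≠ 0`.
Its supremum `NNb b lam Ω` is meaningful only where this set is bounded. -/
def negativeDims (b lam : ℝ) (Ω : Set (ℝ × ℝ)) : Set ℕ :=
  {n | ∃ V : Submodule ℂ (ℝ × ℝ → ℂ), (V : Set (ℝ × ℝ → ℂ)) ⊆ {u | IsTestOn Ω u} ∧
    Module.finrank ℂ V = n ∧ ∀ u ∈ V, u ≠ 0 → qb b u < lam * ∫ p, ‖u p‖ ^ 2}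

theorem finrank_le_card_mul_NNb {F ι : Type*} [AddCommGroup F] [Module ℂ F] [Fintype ι]
    (h_bdd : BddAbove (negativeDims b lam Ω))
    {W : ι → F →ₗ[ℂ] ℝ × ℝ → ℂ} (hW_test : ∀ i c, IsTestOn Ω (W i c))
    (hW : ∀ c ≠ 0, ∑ i, qb b (W i c) < lam * ∑ i, ∫ p, ‖W i c p‖ ^ 2) :
    Module.finrank ℂ F ≤ Fintype.card ι * NNb b lam Ω := by
  by_contra! hlt
  let W' (i : ι) : F →ₗ[ℂ] testSubmodule Ω := (W i).codRestrict _ (hW_test i)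
  have hW' (c : F) (hc : c ≠ 0) : ∑ i, (landauForm Ω b lam (W' i c) (W' i c)).re < 0 := by
    simp only [re_landauForm_self, Finset.sum_sub_distrib, ← Finset.mul_sum]
    exact sub_neg.mpr (hW c hc)
  obtain ⟨V, -, hV, h_rank⟩ := exists_isNegOn_lt_finrank landauForm_isSymm hW' hlt
  refine h_rank.not_ge (le_csSup h_bdd ⟨V.map (testSubmodule Ω).subtype, ?_, ?_, ?_⟩)
  · rintro _ ⟨u, -, rfl⟩
    exact u.2
  · exact Submodule.finrank_map_subtype_eq _ V
  · rintro _ ⟨u, hu, rfl⟩ hu0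
    have h_neg := hV u hu (by rintro rfl; simp at hu0)
    rw [re_landauForm_self] at h_neg
    exact sub_neg.mp h_neg

end MagneticForm

section Finiteness

theorem norm_integral_sq_le {α E : Type*} [MeasurableSpace α] {μ : Measure α} [IsFiniteMeasure μ]
    [NormedAddCommGroup E] [NormedSpace ℝ E] [CompleteSpace E] {f : α → E} (hf : Integrable f μ)
    (hf_sq : Integrable (fun x => ‖f x‖ ^ 2) μ) :
    ‖∫ x, f x ∂μ‖ ^ 2 ≤ μ.real Set.univ * ∫ x, ‖f x‖ ^ 2 ∂μ := by
  rcases eq_or_ne μ 0 with rfl | hμ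
  · simp
  have : NeZero μ := ⟨hμ⟩
  have hm : 0 < μ.real Set.univ := measureReal_univ_pos
  have h_convex : ConvexOn ℝ Set.univ fun z : E => ‖z‖ ^ 2 :=
    convexOn_univ_norm.pow (fun _ _ => norm_nonneg _) 2
  have h_jensen := h_convex.map_average_le (by fun_prop) isClosed_univ (by simp) hf hf_sq
  rw [average_eq, average_eq, norm_smul, mul_pow, smul_eq_mul, norm_of_nonneg (by positivity),
    inv_pow, inv_mul_le_iff₀ (by positivity)] at h_jensen
  refine h_jensen.trans_eq ?_
  field_simp

theorem norm_sub_sq_le_mul_integral_deriv {f f' : ℝ → ℂ} (hf : ∀ x, HasDerivAt f (f' x) x)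
    (hf' : Continuous f') {a h x y : ℝ} (hx : x ∈ Set.Ioc a (a + h)) (hy : y ∈ Set.Ioc a (a + h)) :
    ‖f x - f y‖ ^ 2 ≤ h * ∫ s in a..a + h, ‖f' s‖ ^ 2 := by
  wlog hle : y ≤ x generalizing x y
  · rw [norm_sub_rev]
    exact this hy hx (by linarith)
  have hh : a ≤ a + h := hx.1.le.trans hx.2
  rw [← intervalIntegral.integral_eq_sub_of_hasDerivAt (fun s _ => hf s)
    (hf'.intervalIntegrable _ _), intervalIntegral.integral_of_le hle]
  have h_sq : IntegrableOn (fun s => ‖f' s‖ ^ 2) (Set.Ioc a (a + h)) :=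
    (hf'.norm.pow 2).integrableOn_Ioc
  calc ‖∫ s in Set.Ioc y x, f' s‖ ^ 2
      ≤ (volume.restrict (Set.Ioc y x)).real Set.univ * ∫ s in Set.Ioc y x, ‖f' s‖ ^ 2 :=
        norm_integral_sq_le hf'.integrableOn_Ioc (hf'.norm.pow 2).integrableOn_Ioc
    _ ≤ h * ∫ s in Set.Ioc a (a + h), ‖f' s‖ ^ 2 := by
        refine mul_le_mul ?_ (setIntegral_mono_set h_sq (.of_forall fun s => sq_nonneg _)
          (Set.Ioc_subset_Ioc hy.1.le hx.2).eventuallyLE)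
          (integral_nonneg fun s => sq_nonneg _) (by linarith)
        simp only [measureReal_restrict_apply_univ, volume_real_Ioc_of_le hle]
        linarith [hx.2, hy.1]
    _ = h * ∫ s in a..a + h, ‖f' s‖ ^ 2 := by rw [intervalIntegral.integral_of_le hh]

theorem hasDerivAt_dX {u : ℝ × ℝ → ℂ} (hu : Differentiable ℝ u) (x y : ℝ) :
    HasDerivAt (fun s => u (s, y)) (dX u (x, y)) x :=
  (hu (x, y)).hasFDerivAt.comp_hasDerivAt x ((hasDerivAt_id x).prodMk (hasDerivAt_const x y))

theorem hasDerivAt_dY {u : ℝ × ℝ → ℂ} (hu : Differentiable ℝ u) (x y : ℝ) :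
    HasDerivAt (fun s => u (x, s)) (dY u (x, y)) y :=
  (hu (x, y)).hasFDerivAt.comp_hasDerivAt y ((hasDerivAt_const y x).prodMk (hasDerivAt_id y))

/-- The half-open square of side `h` with lower left corner `(a, c)`. -/
def cell (a c h : ℝ) : Set (ℝ × ℝ) := Set.Ioc a (a + h) ×ˢ Set.Ioc c (c + h)

variable {a c h : ℝ} {Ω : Set (ℝ × ℝ)} {u : ℝ × ℝ → ℂ}

theorem measurableSet_cell : MeasurableSet (cell a c h) := measurableSet_Ioc.prod measurableSet_Ioc

instance : IsFiniteMeasure (volume.restrict (cell a c h)) :=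
  isFiniteMeasure_restrict.mpr
    ((Metric.isBounded_Ioc _ _).prod (Metric.isBounded_Ioc _ _)).measure_lt_top.ne

theorem integrableOn_cell {E : Type*} [NormedAddCommGroup E] {f : ℝ × ℝ → E} (hf : Continuous f) :
    IntegrableOn f (cell a c h) :=
  (hf.continuousOn.integrableOn_compact ((isCompact_Icc (a := a) (b := a + h)).prod
    (isCompact_Icc (a := c) (b := c + h)))).mono_set
    (Set.prod_mono Set.Ioc_subset_Icc_self Set.Ioc_subset_Icc_self)

theorem setIntegral_cell {f : ℝ × ℝ → ℝ} (hf : Continuous f) (hh : 0 ≤ h) :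
    ∫ p in cell a c h, f p = ∫ x in a..a + h, ∫ y in c..c + h, f (x, y) := by
  simp only [intervalIntegral.integral_of_le (le_add_of_nonneg_right hh)]
  exact setIntegral_prod f (integrableOn_cell hf)

theorem volume_real_cell (hh : 0 ≤ h) : volume.real (cell a c h) = h ^ 2 := by
  simpa [sq] using setIntegral_cell (a := a) (c := c) (continuous_const (y := (1 : ℝ))) hh

theorem setIntegral_cell_integral_snd {f : ℝ × ℝ → ℝ} (hf : Continuous f) (hh : 0 ≤ h) :
    ∫ p in cell a c h, ∫ y in c..c + h, f (p.1, y) = h * ∫ p in cell a c h, f p := by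
  rw [setIntegral_cell hf hh, setIntegral_cell (by fun_prop) hh]
  simp

theorem setIntegral_cell_integral_fst {f : ℝ × ℝ → ℝ} (hf : Continuous f) (hh : 0 ≤ h) :
    ∫ p in cell a c h, ∫ x in a..a + h, f (x, p.2) = h * ∫ p in cell a c h, f p := by
  have h_swap := intervalIntegral_intervalIntegral_swap (F := fun x y => f (x, y))
    (a := a) (b := a + h) (c := c) (d := c + h) (by
      rw [Set.uIoc_of_le (le_add_of_nonneg_right hh), Set.uIoc_of_le (le_add_of_nonneg_right hh)]
      exact integrableOn_cell hf)
  rw [setIntegral_cell hf hh, h_swap, setIntegral_cell (by fun_prop) hh]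
  simp

theorem continuous_dX (hu : ContDiff ℝ 1 u) : Continuous (dX u) :=
  (hu.continuous_fderiv one_ne_zero).clm_apply continuous_const

theorem continuous_dY (hu : ContDiff ℝ 1 u) : Continuous (dY u) :=
  (hu.continuous_fderiv one_ne_zero).clm_apply continuous_const

theorem norm_sub_sq_le_of_mem_cell (hu : ContDiff ℝ 1 u) {p q : ℝ × ℝ} (hp : p ∈ cell a c h)
    (hq : q ∈ cell a c h) :
    ‖u p - u q‖ ^ 2 ≤ 2 * h * (∫ x in a..a + h, ‖dX u (x, p.2)‖ ^ 2)
      + 2 * h * ∫ y in c..c + h, ‖dY u (q.1, y)‖ ^ 2 := by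
  have h_diff := hu.differentiable one_ne_zero
  have h_horizontal := norm_sub_sq_le_mul_integral_deriv (fun x => hasDerivAt_dX h_diff x p.2)
    ((continuous_dX hu).comp (by fun_prop)) hp.1 hq.1
  have h_vertical := norm_sub_sq_le_mul_integral_deriv (fun y => hasDerivAt_dY h_diff q.1 y)
    ((continuous_dY hu).comp (by fun_prop)) hp.2 hq.2
  calc ‖u p - u q‖ ^ 2 ≤ (‖u p - u (q.1, p.2)‖ + ‖u (q.1, p.2) - u q‖) ^ 2 := by
        gcongr
        exact norm_sub_le_norm_sub_add_norm_sub _ _ _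
    _ ≤ 2 * (‖u p - u (q.1, p.2)‖ ^ 2 + ‖u (q.1, p.2) - u q‖ ^ 2) := add_sq_le
    _ ≤ _ := by linarith

theorem norm_sq_le_of_setIntegral_cell_eq_zero (hu : ContDiff ℝ 1 u) (hh : 0 < h)
    (h_mean : ∫ p in cell a c h, u p = 0) {p : ℝ × ℝ} (hp : p ∈ cell a c h) :
    ‖u p‖ ^ 2 ≤ 2 * h * (∫ x in a..a + h, ‖dX u (x, p.2)‖ ^ 2)
      + 2 * ∫ q in cell a c h, ‖dY u q‖ ^ 2 := by
  have hu_cont := hu.continuous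
  have hdY := continuous_dY hu
  set A := ∫ x in a..a + h, ‖dX u (x, p.2)‖ ^ 2
  have h_avg : ∫ q in cell a c h, (u p - u q) = h ^ 2 * u p := by
    rw [integral_sub (integrable_const _) (integrableOn_cell hu_cont), h_mean, sub_zero,
      integral_const, measureReal_restrict_apply_univ, volume_real_cell hh.le]
    simp
  have h_cs := norm_integral_sq_le (μ := volume.restrict (cell a c h)) (f := fun q => u p - u q)
    (integrableOn_cell (by fun_prop)) (integrableOn_cell (by fun_prop))
  rw [h_avg, measureReal_restrict_apply_univ, volume_real_cell hh.le, norm_mul, mul_pow, norm_pow,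
    Complex.norm_real, norm_of_nonneg hh.le, sq (h ^ 2), mul_assoc,
    mul_le_mul_iff_of_pos_left (by positivity)] at h_cs
  have h_osc : ∫ q in cell a c h, ‖u p - u q‖ ^ 2
      ≤ h ^ 2 * (2 * h * A + 2 * ∫ q in cell a c h, ‖dY u q‖ ^ 2) :=
    calc ∫ q in cell a c h, ‖u p - u q‖ ^ 2
        ≤ ∫ q in cell a c h, (2 * h * A + 2 * h * ∫ y in c..c + h, ‖dY u (q.1, y)‖ ^ 2) :=
          setIntegral_mono_on (integrableOn_cell (by fun_prop)) (integrableOn_cell (by fun_prop))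
            measurableSet_cell fun q hq => norm_sub_sq_le_of_mem_cell hu hp hq
      _ = _ := by
          rw [integral_add (integrable_const _) (integrableOn_cell (by fun_prop)),
            setIntegral_const, volume_real_cell hh.le, smul_eq_mul, integral_const_mul,
            setIntegral_cell_integral_snd (f := fun q => ‖dY u q‖ ^ 2) (by fun_prop) hh.le]
          ring
  exact le_of_mul_le_mul_left (h_cs.trans h_osc) (by positivity)

theorem poincare_cell (hu : ContDiff ℝ 1 u) (hh : 0 < h) (h_mean : ∫ p in cell a c h, u p = 0) :
    ∫ p in cell a c h, ‖u p‖ ^ 2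
      ≤ 2 * h ^ 2 * ∫ p in cell a c h, (‖dX u p‖ ^ 2 + ‖dY u p‖ ^ 2) := by
  have hu_cont := hu.continuous
  have hdX := continuous_dX hu
  have hdY := continuous_dY hu
  calc ∫ p in cell a c h, ‖u p‖ ^ 2
      ≤ ∫ p in cell a c h, (2 * h * (∫ x in a..a + h, ‖dX u (x, p.2)‖ ^ 2)
          + 2 * ∫ q in cell a c h, ‖dY u q‖ ^ 2) :=
        setIntegral_mono_on (integrableOn_cell (by fun_prop)) (integrableOn_cell (by fun_prop))
          measurableSet_cell fun p hp => norm_sq_le_of_setIntegral_cell_eq_zero hu hh h_mean hp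
    _ = _ := by
        rw [integral_add (integrableOn_cell (by fun_prop)) (integrable_const _),
          setIntegral_const, volume_real_cell hh.le, smul_eq_mul, integral_const_mul,
          setIntegral_cell_integral_fst (f := fun q => ‖dX u q‖ ^ 2) (by fun_prop) hh.le,
          integral_add (integrableOn_cell (by fun_prop)) (integrableOn_cell (by fun_prop))]
        ring

/-- The cell with index `i` of the grid of mesh `h`. -/
def gridCell (h : ℝ) (i : ℤ × ℤ) : Set (ℝ × ℝ) := cell (i.1 * h) (i.2 * h) h

theorem pairwise_disjoint_gridCell (h : ℝ) : Pairwise (Function.onFun Disjoint (gridCell h)) := by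
  have h_Ioc : Pairwise (Function.onFun Disjoint fun n : ℤ => Set.Ioc (n * h) (n * h + h)) := by
    simpa [add_mul] using Set.pairwise_disjoint_Ioc_zsmul h
  intro i j hij
  rcases not_and_or.mp (mt Prod.ext_iff.mpr hij) with h_fst | h_snd
  · exact Set.disjoint_prod.mpr (.inl (h_Ioc h_fst))
  · exact Set.disjoint_prod.mpr (.inr (h_Ioc h_snd))

theorem setIntegral_biUnion_gridCell (h : ℝ) (S : Finset (ℤ × ℤ)) {f : ℝ × ℝ → ℝ}
    (hf : Continuous f) :
    ∫ p in ⋃ i ∈ S, gridCell h i, f p = ∑ i ∈ S, ∫ p in gridCell h i, f p :=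
  integral_biUnion_finset S (fun _ _ => measurableSet_cell)
    ((pairwise_disjoint_gridCell h).set_pairwise _) fun _ _ => integrableOn_cell hf

theorem mem_Ioc_ceil_div_sub_one (hh : 0 < h) (x : ℝ) :
    x ∈ Set.Ioc (((⌈x / h⌉ - 1 : ℤ) : ℝ) * h) ((⌈x / h⌉ - 1 : ℤ) * h + h) := by
  push_cast
  constructor
  · rw [← lt_div_iff₀ hh]
    linarith [Int.ceil_lt_add_one (x / h)]
  · rw [sub_one_mul, sub_add_cancel, ← div_le_iff₀ hh]
    exact Int.le_ceil _

theorem exists_finset_subset_biUnion_gridCell (hΩ : Bornology.IsBounded Ω) (hh : 0 < h) :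
    ∃ S : Finset (ℤ × ℤ), Ω ⊆ ⋃ i ∈ S, gridCell h i := by
  obtain ⟨R, hR⟩ := hΩ.subset_closedBall 0
  let I : Finset ℤ := Finset.Icc (⌈-R / h⌉ - 1) (⌈R / h⌉ - 1)
  have hI {x : ℝ} (hx : |x| ≤ R) : ⌈x / h⌉ - 1 ∈ I := by
    obtain ⟨hx1, hx2⟩ := abs_le.mp hx
    refine Finset.mem_Icc.mpr ⟨?_, ?_⟩ <;> gcongr
  refine ⟨I ×ˢ I, fun p hp => ?_⟩
  obtain ⟨hp1, hp2⟩ : |p.1| ≤ R ∧ |p.2| ≤ R := by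
    simpa [Prod.norm_def] using hR hp
  exact Set.mem_biUnion (Finset.mem_coe.mpr (Finset.mk_mem_product (hI hp1) (hI hp2)))
    ⟨mem_Ioc_ceil_div_sub_one hh p.1, mem_Ioc_ceil_div_sub_one hh p.2⟩

theorem IsTestOn.contDiff_one (hu : IsTestOn Ω u) : ContDiff ℝ 1 u := hu.1.of_le (by simp)

theorem IsTestOn.integrable_norm_fderiv_apply_sq (hu : IsTestOn Ω u) (v : ℝ × ℝ) :
    Integrable fun p => ‖fderiv ℝ u p v‖ ^ 2 := by
  simpa [magDeriv] using hu.integrable_norm_magDeriv_sq v (a := fun _ => 0) continuous_const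

theorem IsTestOn.poincare_gridCell (hu : IsTestOn Ω u) (hh : 0 < h) {S : Finset (ℤ × ℤ)}
    (hΩ : Ω ⊆ ⋃ i ∈ S, gridCell h i) (h_mean : ∀ i ∈ S, ∫ p in gridCell h i, u p = 0) :
    ∫ p, ‖u p‖ ^ 2 ≤ 2 * h ^ 2 * ∫ p, (‖dX u p‖ ^ 2 + ‖dY u p‖ ^ 2) := by
  have hu_cont := hu.1.continuous
  have hdX := continuous_dX hu.contDiff_one
  have hdY := continuous_dY hu.contDiff_one
  have h_supp (p : ℝ × ℝ) (hp : p ∉ ⋃ i ∈ S, gridCell h i) : ‖u p‖ ^ 2 = 0 := by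
    simp [image_eq_zero_of_notMem_tsupport fun h_mem => hp (hΩ (hu.2.2 h_mem))]
  calc ∫ p, ‖u p‖ ^ 2 = ∑ i ∈ S, ∫ p in gridCell h i, ‖u p‖ ^ 2 := by
        rw [← setIntegral_eq_integral_of_forall_compl_eq_zero h_supp,
          setIntegral_biUnion_gridCell h S (by fun_prop)]
    _ ≤ ∑ i ∈ S, 2 * h ^ 2 * ∫ p in gridCell h i, (‖dX u p‖ ^ 2 + ‖dY u p‖ ^ 2) :=
        Finset.sum_le_sum fun i hi => poincare_cell hu.contDiff_one hh (h_mean i hi)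
    _ = 2 * h ^ 2 * ∫ p in ⋃ i ∈ S, gridCell h i, (‖dX u p‖ ^ 2 + ‖dY u p‖ ^ 2) := by
        rw [setIntegral_biUnion_gridCell h S (by fun_prop), Finset.mul_sum]
    _ ≤ 2 * h ^ 2 * ∫ p, (‖dX u p‖ ^ 2 + ‖dY u p‖ ^ 2) := by
        refine mul_le_mul_of_nonneg_left ?_ (by positivity)
        exact setIntegral_le_integral ((hu.integrable_norm_fderiv_apply_sq (1, 0)).add
          (hu.integrable_norm_fderiv_apply_sq (0, 1)))
          (.of_forall fun p => add_nonneg (sq_nonneg _) (sq_nonneg _))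

theorem exists_mem_ne_zero_setIntegral_gridCell_eq_zero {V : Submodule ℂ (ℝ × ℝ → ℂ)}
    (hV : ∀ u ∈ V, Continuous u) {S : Finset (ℤ × ℤ)} (hS : S.card < Module.finrank ℂ V) (h : ℝ) :
    ∃ u ∈ V, u ≠ 0 ∧ ∀ i ∈ S, ∫ p in gridCell h i, u p = 0 := by
  have : FiniteDimensional ℂ V := FiniteDimensional.of_finrank_pos (by omega)
  let means : V →ₗ[ℂ] S → ℂ :=
    { toFun u i := ∫ p in gridCell h i, (u : ℝ × ℝ → ℂ) p
      map_add' u v := funext fun i =>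
        integral_add (integrableOn_cell (hV u u.2)) (integrableOn_cell (hV v v.2))
      map_smul' z u := funext fun i => integral_const_mul z _ }
  have h_ker : means.ker ≠ ⊥ := LinearMap.ker_ne_bot_of_finrank_lt (by simpa using hS)
  obtain ⟨u, hu, hu0⟩ := Submodule.exists_mem_ne_zero_of_ne_bot h_ker
  exact ⟨u, u.2, by simpa using hu0, fun i hi => congrFun (LinearMap.mem_ker.mp hu) ⟨i, hi⟩⟩

theorem norm_fderiv_apply_sq_le (v : ℝ × ℝ) (A : ℝ × ℝ → ℝ) (u : ℝ × ℝ → ℂ) (p : ℝ × ℝ) :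
    ‖fderiv ℝ u p v‖ ^ 2 ≤ 2 * ‖magDeriv v A u p‖ ^ 2 + 2 * A p ^ 2 * ‖u p‖ ^ 2 := by
  have h_triangle : ‖fderiv ℝ u p v‖ ≤ ‖magDeriv v A u p‖ + ‖A p * u p‖ := by
    simpa [magDeriv] using norm_add_le (magDeriv v A u p) (A p * u p)
  calc ‖fderiv ℝ u p v‖ ^ 2 ≤ (‖magDeriv v A u p‖ + ‖A p * u p‖) ^ 2 := by gcongr
    _ ≤ 2 * (‖magDeriv v A u p‖ ^ 2 + ‖A p * u p‖ ^ 2) := add_sq_le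
    _ = _ := by
        rw [norm_mul, mul_pow, Complex.norm_real, Real.norm_eq_abs, sq_abs]
        ring

theorem IsTestOn.integral_norm_grad_sq_le {b R : ℝ} (hu : IsTestOn Ω u)
    (hΩ : Ω ⊆ Metric.closedBall 0 R) :
    ∫ p, (‖dX u p‖ ^ 2 + ‖dY u p‖ ^ 2) ≤ 2 * qb b u + (b * R) ^ 2 * ∫ p, ‖u p‖ ^ 2 := by
  have h_mag1 := hu.integrable_norm_magDeriv_sq (1, 0) (a := fun p => b * p.2 / 2) (by fun_prop)
  have h_mag2 := hu.integrable_norm_magDeriv_sq (0, 1) (a := fun p => -(b * p.1 / 2)) (by fun_prop)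
  have h_mag : Integrable fun p => 2 * (‖magDeriv (1, 0) (fun p => b * p.2 / 2) u p‖ ^ 2
      + ‖magDeriv (0, 1) (fun p => -(b * p.1 / 2)) u p‖ ^ 2) := (h_mag1.add h_mag2).const_mul 2
  have h_norm := (hu.memLp.integrable_norm_pow two_ne_zero).const_mul ((b * R) ^ 2)
  rw [qb_eq_integral, ← integral_const_mul, ← integral_const_mul,
    ← integral_add h_mag h_norm]
  refine integral_mono ((hu.integrable_norm_fderiv_apply_sq (1, 0)).add
    (hu.integrable_norm_fderiv_apply_sq (0, 1))) (h_mag.add h_norm) fun p => ?_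
  have h_dX := norm_fderiv_apply_sq_le (1, 0) (fun p => b * p.2 / 2) u p
  have h_dY := norm_fderiv_apply_sq_le (0, 1) (fun p => -(b * p.1 / 2)) u p
  have h_pot : (p.1 ^ 2 + p.2 ^ 2) * ‖u p‖ ^ 2 ≤ 2 * R ^ 2 * ‖u p‖ ^ 2 := by
    by_cases hp : p ∈ tsupport u
    · obtain ⟨hp1, hp2⟩ : |p.1| ≤ R ∧ |p.2| ≤ R := by
        simpa [Prod.norm_def] using hΩ (hu.2.2 hp)
      have := sq_le_sq' (abs_le.mp hp1).1 (abs_le.mp hp1).2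
      have := sq_le_sq' (abs_le.mp hp2).1 (abs_le.mp hp2).2
      gcongr
      linarith
    · simp [image_eq_zero_of_notMem_tsupport hp]
  simp only [dX, dY]
  nlinarith [mul_le_mul_of_nonneg_left h_pot (sq_nonneg b)]

theorem bddAbove_negativeDims {b lam : ℝ} (hΩ : Bornology.IsBounded Ω) :
    BddAbove (negativeDims b lam Ω) := by
  obtain ⟨R, hR⟩ := hΩ.subset_closedBall 0
  set κ := 2 * |lam| + (b * R) ^ 2 + 1 with hκ
  have hκ1 : 1 ≤ κ := by linarith [abs_nonneg lam, sq_nonneg (b * R)]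
  obtain ⟨S, hS⟩ := exists_finset_subset_biUnion_gridCell hΩ (show 0 < 1 / (2 * κ) by positivity)
  refine ⟨S.card, ?_⟩
  rintro _ ⟨V, hV, rfl, hV_neg⟩
  by_contra! h_card
  obtain ⟨u, huV, hu0, h_mean⟩ := exists_mem_ne_zero_setIntegral_gridCell_eq_zero
    (fun u hu => (hV hu).1.continuous) h_card (1 / (2 * κ))
  have hu : IsTestOn Ω u := hV huV
  have h_neg := hV_neg u huV hu0
  have h_poincare := hu.poincare_gridCell (by positivity) hS h_mean
  have h_grad := hu.integral_norm_grad_sq_le (b := b) hR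
  have h_qb : 0 ≤ qb b u := integral_nonneg fun p => by positivity
  have h_mass : 0 ≤ ∫ p, ‖u p‖ ^ 2 := integral_nonneg fun p => by positivity
  generalize ∫ p, ‖u p‖ ^ 2 = N at *
  generalize ∫ p, (‖dX u p‖ ^ 2 + ‖dY u p‖ ^ 2) = E at *
  have hN : 0 < N := h_mass.lt_of_ne' (by rintro rfl; linarith)
  have h_lam : lam * N ≤ |lam| * N := by gcongr; exact le_abs_self lam
  have hE : E ≤ κ * N := by rw [hκ]; nlinarith
  have h_contra : N ≤ N / 2 :=
    calc N ≤ 2 * (1 / (2 * κ)) ^ 2 * (κ * N) := h_poincare.trans (by gcongr)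
      _ = 1 / κ * (N / 2) := by field_simp
      _ ≤ 1 * (N / 2) := by gcongr; exact (div_le_one (by positivity)).mpr hκ1
      _ = N / 2 := one_mul _
  linarith

end Finiteness

section MagneticTranslation

variable {v : ℝ × ℝ → ℂ}

theorem magDeriv_exp_mul_comp_add {φ : ℝ × ℝ → ℝ} {φ' : ℝ × ℝ →L[ℝ] ℝ} {a p : ℝ × ℝ}
    (hφ : HasFDerivAt φ φ' p) (hv : DifferentiableAt ℝ v (p + a)) (h : ℝ × ℝ)
    {A B : ℝ × ℝ → ℝ} (hAB : B (p + a) = A p - φ' h) :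
    magDeriv h A (fun p => Complex.exp (φ p * Complex.I) * v (p + a)) p
      = Complex.exp (φ p * Complex.I) * magDeriv h B v (p + a) := by
  have hφℂ : HasFDerivAt (fun p => (φ p : ℂ)) (Complex.ofRealCLM.comp φ') p :=
    Complex.ofRealCLM.hasFDerivAt.comp p hφ
  have h_deriv := (hφℂ.mul_const Complex.I).cexp.fun_mul
    (hv.hasFDerivAt.comp p ((hasFDerivAt_id p).add_const a))
  simp only [id_eq, Function.comp_apply] at h_deriv
  simp only [magDeriv, h_deriv.fderiv, hAB]
  simp only [ContinuousLinearMap.comp_id, add_apply, smul_apply, smul_eq_mul,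
    ContinuousLinearMap.comp_apply, Complex.ofRealCLM_apply, neg_mul, Complex.ofReal_sub]
  linear_combination (-Complex.exp (φ p * Complex.I) * v (p + a) * φ' h) * Complex.I_sq

/-- The phase of the magnetic translation by `a`. Its `xy`-term changes the Landau gauge potential
`(by, 0)` into the symmetric gauge potential `(by/2, -bx/2)` of `qb`. -/
def magPhase (b : ℝ) (a p : ℝ × ℝ) : ℝ := -(b / 2) * (p.1 * p.2) - b * a.2 * p.1

theorem hasFDerivAt_magPhase (b : ℝ) (a p : ℝ × ℝ) :
    HasFDerivAt (magPhase b a) (-(b / 2) • (p.1 • ContinuousLinearMap.snd ℝ ℝ ℝ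
      + p.2 • ContinuousLinearMap.fst ℝ ℝ ℝ) - (b * a.2) • ContinuousLinearMap.fst ℝ ℝ ℝ) p :=
  ((hasFDerivAt_fst.fun_mul hasFDerivAt_snd).const_mul _).fun_sub (hasFDerivAt_fst.const_mul _)

/-- The magnetic translation by `a`, taking functions in the Landau gauge to functions in the
symmetric gauge. -/
def magTranslate (b : ℝ) (a : ℝ × ℝ) (v : ℝ × ℝ → ℂ) (p : ℝ × ℝ) : ℂ :=
  Complex.exp (magPhase b a p * Complex.I) * v (p + a)

theorem qb_magTranslate (b : ℝ) (a : ℝ × ℝ) (hv : Differentiable ℝ v) :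
    qb b (magTranslate b a v) = ∫ p, (‖magDeriv (1, 0) (fun p => b * p.2) v p‖ ^ 2
      + ‖magDeriv (0, 1) 0 v p‖ ^ 2) := by
  rw [qb_eq_integral, ← integral_add_right_eq_self (fun p => ‖magDeriv (1, 0) _ v p‖ ^ 2 + _) a]
  refine integral_congr_ae (Eventually.of_forall fun p => ?_)
  have h_fst := magDeriv_exp_mul_comp_add (hasFDerivAt_magPhase b a p) (hv (p + a)) (1, 0)
    (A := fun p => b * p.2 / 2) (B := fun p => b * p.2) (by simp; ring)
  have h_snd := magDeriv_exp_mul_comp_add (hasFDerivAt_magPhase b a p) (hv (p + a)) (0, 1)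
    (A := fun p => -(b * p.1 / 2)) (B := 0) (by simp; ring)
  change ‖magDeriv (1, 0) _ (fun p => _ * _) p‖ ^ 2 + ‖magDeriv (0, 1) _ (fun p => _ * _) p‖ ^ 2 = _
  rw [h_fst, h_snd]
  simp only [norm_mul, Complex.norm_exp_ofReal_mul_I, one_mul]

theorem integral_norm_magTranslate_sq (b : ℝ) (a : ℝ × ℝ) (v : ℝ × ℝ → ℂ) :
    ∫ p, ‖magTranslate b a v p‖ ^ 2 = ∫ p, ‖v p‖ ^ 2 := by
  simp only [magTranslate, norm_mul, Complex.norm_exp_ofReal_mul_I, one_mul]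
  exact integral_add_right_eq_self (fun p => ‖v p‖ ^ 2) a

theorem contDiff_magTranslate (b : ℝ) (a : ℝ × ℝ) {n : WithTop ℕ∞} (hv : ContDiff ℝ n v) :
    ContDiff ℝ n (magTranslate b a v) := by
  have h_phase : ContDiff ℝ n (magPhase b a) := by unfold magPhase; fun_prop
  exact ((Complex.ofRealCLM.contDiff.comp h_phase).mul contDiff_const).cexp.mul
    (hv.comp (by fun_prop))

theorem isTestOn_magTranslate {Ω Ω' : Set (ℝ × ℝ)} (hv : IsTestOn Ω v) (b : ℝ) {a : ℝ × ℝ}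
    (ha : ∀ p, p + a ∈ Ω → p ∈ Ω') : IsTestOn Ω' (magTranslate b a v) :=
  ⟨contDiff_magTranslate b a hv.1,
    (hv.2.1.comp_homeomorph (Homeomorph.addRight a)).mul_left,
    fun p hp => ha p (hv.2.2 (tsupport_comp_subset_preimage v (continuous_id.add continuous_const)
      (tsupport_mul_subset_right hp)))⟩

end MagneticTranslation

section FourierSums

variable {L : ℝ} {D : ℕ}

variable (L D) in
/-- The trigonometric polynomial `∑ a_l e^{2πilx/L}` on the circle `ℝ/Lℤ`, with frequencies
`0 ≤ l < D`, as a linear function of its coefficients. -/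
def fourierSum : (Fin D → ℂ) →ₗ[ℂ] C(AddCircle L, ℂ) :=
  Fintype.linearCombination ℂ fun l : Fin D => fourier (l : ℤ)

theorem fourierSum_apply (a : Fin D → ℂ) (x : AddCircle L) :
    fourierSum L D a x = ∑ l, a l * fourier (l : ℤ) x := by
  simp only [fourierSum, Fintype.linearCombination_apply, ContinuousMap.sum_apply,
    ContinuousMap.smul_apply, smul_eq_mul]

theorem continuous_fourierSum_coe (a : Fin D → ℂ) :
    Continuous fun x : ℝ => fourierSum L D a (x : AddCircle L) :=
  (fourierSum L D a).continuous.comp (AddCircle.continuous_mk' L)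

theorem periodic_fourierSum_coe (a : Fin D → ℂ) :
    Function.Periodic (fun x : ℝ => fourierSum L D a (x : AddCircle L)) L :=
  fun x => congrArg (fourierSum L D a) (AddCircle.coe_add_period L x)

theorem hasDerivAt_fourierSum (a : Fin D → ℂ) (x : ℝ) :
    HasDerivAt (fun x : ℝ => fourierSum L D a (x : AddCircle L))
      (fourierSum L D (fun l => Complex.I * (2 * π * l / L : ℝ) * a l) (x : AddCircle L)) x := by
  simp only [fourierSum_apply]
  refine (HasDerivAt.fun_sum fun (l : Fin D) _ =>
    (hasDerivAt_fourier L (l : ℤ) x).const_mul (a l)).congr_deriv ?_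
  refine Finset.sum_congr rfl fun l _ => ?_
  push_cast
  ring

theorem integral_haar_norm_fourierSum_sq [Fact (0 < L)] (a : Fin D → ℂ) :
    ∫ x, ‖fourierSum L D a x‖ ^ 2 ∂AddCircle.haarAddCircle = ∑ l, ‖a l‖ ^ 2 := by
  let f : Lp ℂ 2 AddCircle.haarAddCircle :=
    ContinuousMap.toLp (E := ℂ) 2 AddCircle.haarAddCircle ℂ (fourierSum L D a)
  have hf : f = ∑ l, a l • fourierLp 2 (l : ℤ) := by
    simp only [f, fourierSum, Fintype.linearCombination_apply, map_sum, map_smul]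
  have h_orth : Orthonormal ℂ fun l : Fin D => fourierLp (T := L) 2 (l : ℤ) :=
    orthonormal_fourier.comp _ (Nat.cast_injective.comp Fin.val_injective)
  have h_inner : inner ℂ f f = ((∑ l, ‖a l‖ ^ 2 : ℝ) : ℂ) := by
    rw [hf, h_orth.inner_sum]
    push_cast
    exact Finset.sum_congr rfl fun l _ => Complex.conj_mul' (a l)
  rw [ContinuousMap.inner_toLp] at h_inner
  simp only [Complex.mul_conj', ← Complex.ofReal_pow] at h_inner
  exact Complex.ofReal_injective (integral_complex_ofReal.symm.trans h_inner)

theorem integral_norm_fourierSum_sq (hL : 0 < L) (a : Fin D → ℂ) :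
    ∫ x in (0 : ℝ)..L, ‖fourierSum L D a (x : AddCircle L)‖ ^ 2 = L * ∑ l, ‖a l‖ ^ 2 := by
  have : Fact (0 < L) := ⟨hL⟩
  have h_circle := AddCircle.intervalIntegral_preimage L 0 fun x => ‖fourierSum L D a x‖ ^ 2
  rw [zero_add] at h_circle
  rw [h_circle, ← integral_haar_norm_fourierSum_sq (L := L), AddCircle.integral_haarAddCircle,
    smul_eq_mul, mul_inv_cancel_left₀ hL.ne']

end FourierSums

section TrialFunctions

open Polynomial

variable {b L s w₁ w₂ M : ℝ} {D : ℕ}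

theorem integral_cutoff_sq_mul_norm_fourierSum_sq {w : ℝ} (hw : 0 < w) (hwL : w ≤ L)
    (a : Fin D → ℂ) :
    ∫ x : ℝ, cutoff w L x ^ 2 * ‖fourierSum L D a (x : AddCircle L)‖ ^ 2 = L * ∑ l, ‖a l‖ ^ 2 := by
  rw [integral_cutoff_sq_mul_periodic hw hwL (continuous_fourierSum_coe a)
    (periodic_fourierSum_coe a), integral_norm_fourierSum_sq (hw.trans_le hwL)]

theorem integral_norm_cutoff_mul_fourierSum_add_sq_le {w : ℝ} (hw : 0 < w) (hwL : w ≤ L)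
    (hM : ∀ t, |deriv transitionAngle t| ≤ M) (a a' : Fin D → ℂ) :
    ∫ x : ℝ, ‖(cutoff w L x : ℂ) * fourierSum L D a (x : AddCircle L)
        + ((deriv (cutoff w L) x : ℝ) : ℂ) * fourierSum L D a' (x : AddCircle L)‖ ^ 2
      ≤ L * ∑ l, (‖a l‖ ^ 2 + (M / w) ^ 2 * ‖a' l‖ ^ 2) := by
  have hL : 0 < L := hw.trans_le hwL
  have h_int (a : Fin D → ℂ) :
      IntervalIntegrable (fun x : ℝ => ‖fourierSum L D a (x : AddCircle L)‖ ^ 2) volume 0 L :=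
    ((continuous_fourierSum_coe a).norm.pow 2).intervalIntegrable _ _
  refine (integral_norm_cutoff_mul_add_deriv_sq_le hw hwL hM (continuous_fourierSum_coe a)
    (periodic_fourierSum_coe a) (continuous_fourierSum_coe a') (periodic_fourierSum_coe a')).trans
      (le_of_eq ?_)
  rw [intervalIntegral.integral_add (h_int a) ((h_int a').const_mul _),
    intervalIntegral.integral_const_mul, integral_norm_fourierSum_sq hL,
    integral_norm_fourierSum_sq hL, Finset.sum_add_distrib, ← Finset.mul_sum]
  ring

/-- The point around which the Landau function of momentum `2πl/L` concentrates. -/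
def guidingCenter (b L : ℝ) (l : ℕ) : ℝ := 2 * π * l / L / b

/-- The Fourier coefficients in `x` of a superposition of Landau functions, with polynomial
amplitudes `P`, at height `y`. -/
def modeProfile (b L : ℝ) (P : Fin D → ℂ[X]) (y : ℝ) (l : Fin D) : ℂ :=
  polyGaussian b (P l) (y - guidingCenter b L l)

theorem hasDerivAt_modeProfile (b L : ℝ) (P : Fin D → ℂ[X]) (y : ℝ) :
    HasDerivAt (modeProfile b L P) (modeProfile b L (fun l => oscillatorDeriv b (P l)) y) y :=
  hasDerivAt_pi.mpr fun _ => (hasDerivAt_polyGaussian b _ _).comp_sub_const _ _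

theorem momentum_mul_modeProfile (hb : b ≠ 0) (P : Fin D → ℂ[X]) (y : ℝ) :
    (fun l : Fin D => Complex.I * (2 * π * l / L : ℝ) * modeProfile b L P y l)
      = (Complex.I * b * y) • modeProfile b L P y
        - (Complex.I * b) • modeProfile b L (fun l => X * P l) y := by
  have h_center (l : ℕ) : 2 * π * l / L = b * guidingCenter b L l := by
    rw [guidingCenter, mul_div_cancel₀ _ hb]
  ext l
  simp only [modeProfile, polyGaussian_X_mul, h_center, Pi.sub_apply, Pi.smul_apply, smul_eq_mul]
  push_cast
  ring

theorem integrable_norm_modeProfile_sq (hb : 0 < b) (L : ℝ) (P : Fin D → ℂ[X]) (l : Fin D) :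
    Integrable fun y => ‖modeProfile b L P y l‖ ^ 2 :=
  (integrable_norm_polyGaussian_sq hb (P l)).comp_sub_right _

theorem integral_norm_modeProfile_sq (b L : ℝ) (P : Fin D → ℂ[X]) (l : Fin D) :
    ∫ y, ‖modeProfile b L P y l‖ ^ 2 = gaussianNormSq b (P l) := by
  rw [← integral_norm_polyGaussian_sq]
  exact integral_sub_right_eq_self (fun y => ‖polyGaussian b (P l) y‖ ^ 2) (guidingCenter b L l)

theorem integrable_sum_norm_modeProfile_sq (hb : 0 < b) (L c d : ℝ) (P Q : Fin D → ℂ[X]) :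
    Integrable fun y => L * ∑ l, (c * ‖modeProfile b L P y l‖ ^ 2
      + d * ‖modeProfile b L Q y l‖ ^ 2) :=
  (integrable_finsetSum _ fun l _ => ((integrable_norm_modeProfile_sq hb L P l).const_mul c).add
    ((integrable_norm_modeProfile_sq hb L Q l).const_mul d)).const_mul L

theorem integral_sum_norm_modeProfile_sq (hb : 0 < b) (L c d : ℝ) (P Q : Fin D → ℂ[X]) :
    ∫ y, L * ∑ l, (c * ‖modeProfile b L P y l‖ ^ 2 + d * ‖modeProfile b L Q y l‖ ^ 2)
      = L * ∑ l, (c * gaussianNormSq b (P l) + d * gaussianNormSq b (Q l)) := by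
  have hP (l) := (integrable_norm_modeProfile_sq hb L P l).const_mul c
  have hQ (l) := (integrable_norm_modeProfile_sq hb L Q l).const_mul d
  have hPQ (l) : Integrable fun y =>
      c * ‖modeProfile b L P y l‖ ^ 2 + d * ‖modeProfile b L Q y l‖ ^ 2 := (hP l).add (hQ l)
  rw [integral_const_mul, integral_finsetSum _ fun l _ => hPQ l]
  simp only [integral_add (hP _) (hQ _), integral_const_mul, integral_norm_modeProfile_sq]

/-- The trial function `χ₁(x) χ₂(y - τ) ∑_l e^{2πilx/L} P_l(y - y_l) e^{-b(y - y_l)²/2}` in the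
Landau gauge, where `y_l` are the guiding centres and `χ₁, χ₂` are cutoffs of lengths `L, s`. -/
def trialFun (b L s w₁ w₂ τ : ℝ) (P : Fin D → ℂ[X]) (p : ℝ × ℝ) : ℂ :=
  (cutoff w₁ L p.1 : ℂ) * ((cutoff w₂ s (p.2 - τ) : ℂ)
    * fourierSum L D (modeProfile b L P p.2) (p.1 : AddCircle L))

theorem contDiff_trialFun (b L s w₁ w₂ τ : ℝ) (P : Fin D → ℂ[X]) :
    ContDiff ℝ (⊤ : ℕ∞) (trialFun b L s w₁ w₂ τ P) := by
  have h_fourier (l : ℤ) : ContDiff ℝ (⊤ : ℕ∞) fun x : ℝ => fourier l (x : AddCircle L) := by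
    simp only [fourier_coe_apply]
    exact ((contDiff_const.mul Complex.ofRealCLM.contDiff).div_const _).cexp
  unfold trialFun
  simp only [fourierSum_apply, modeProfile]
  refine (Complex.ofRealCLM.contDiff.comp ((contDiff_cutoff w₁ L).comp contDiff_fst)).mul
    ((Complex.ofRealCLM.contDiff.comp ((contDiff_cutoff w₂ s).comp (by fun_prop))).mul
      (ContDiff.sum fun l _ => ?_))
  exact ((contDiff_polyGaussian b (P l)).comp (by fun_prop)).mul ((h_fourier l).comp contDiff_fst)

theorem isTestOn_trialFun (hw₁ : 0 < w₁) (hw₂ : 0 < w₂) (b L s τ : ℝ) (P : Fin D → ℂ[X]) :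
    IsTestOn (Set.Icc 0 (L + w₁) ×ˢ Set.Icc τ (τ + (s + w₂))) (trialFun b L s w₁ w₂ τ P) := by
  have h_cutoff {w ℓ t : ℝ} (hw : 0 < w) (ht : cutoff w ℓ t ≠ 0) : t ∈ Set.Icc 0 (ℓ + w) :=
    ⟨(not_le.mp (mt (cutoff_of_nonpos hw) ht)).le, (not_le.mp (mt (cutoff_of_add_le hw) ht)).le⟩
  have h_supp : Function.support (trialFun b L s w₁ w₂ τ P)
      ⊆ Set.Icc 0 (L + w₁) ×ˢ Set.Icc τ (τ + (s + w₂)) := by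
    intro p hp
    obtain ⟨h₁, h₂, -⟩ : cutoff w₁ L p.1 ≠ 0 ∧ cutoff w₂ s (p.2 - τ) ≠ 0 ∧ _ := by
      simpa only [trialFun, Function.mem_support, mul_ne_zero_iff, Complex.ofReal_ne_zero] using hp
    have h₂ := h_cutoff hw₂ h₂
    exact ⟨h_cutoff hw₁ h₁, by linarith [h₂.1], by linarith [h₂.2]⟩
  have h_compact := (isCompact_Icc (a := 0) (b := L + w₁)).prod
    (isCompact_Icc (a := τ) (b := τ + (s + w₂)))
  exact ⟨contDiff_trialFun b L s w₁ w₂ τ P,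
    HasCompactSupport.of_support_subset_isCompact h_compact h_supp,
    closure_minimal h_supp h_compact.isClosed⟩

theorem differentiable_trialFun (b L s w₁ w₂ τ : ℝ) (P : Fin D → ℂ[X]) :
    Differentiable ℝ (trialFun b L s w₁ w₂ τ P) :=
  (contDiff_trialFun b L s w₁ w₂ τ P).differentiable (by simp)

theorem magDeriv_fst_trialFun (hb : b ≠ 0) (L s w₁ w₂ τ : ℝ) (P : Fin D → ℂ[X]) (x y : ℝ) :
    magDeriv (1, 0) (fun p => b * p.2) (trialFun b L s w₁ w₂ τ P) (x, y)
      = (cutoff w₁ L x : ℂ) * fourierSum L D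
          ((-b * cutoff w₂ s (y - τ) : ℂ) • modeProfile b L (fun l => X * P l) y) (x : AddCircle L)
        + ((deriv (cutoff w₁ L) x : ℝ) : ℂ) * fourierSum L D
          ((-Complex.I * cutoff w₂ s (y - τ)) • modeProfile b L P y) (x : AddCircle L) := by
  have h_deriv := (hasDerivAt_cutoff w₁ L x).ofReal_comp.fun_mul
    ((hasDerivAt_fourierSum (L := L) (modeProfile b L P y) x).const_mul
      (cutoff w₂ s (y - τ) : ℂ))
  have h_dX := (hasDerivAt_dX (differentiable_trialFun b L s w₁ w₂ τ P) x y).unique h_deriv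
  rw [magDeriv, ← dX, h_dX, momentum_mul_modeProfile hb]
  simp only [trialFun, map_sub, map_smul, ContinuousMap.sub_apply, ContinuousMap.smul_apply,
    smul_eq_mul, Complex.ofReal_mul]
  ring_nf
  simp only [Complex.I_sq]
  ring

theorem magDeriv_snd_trialFun (b L s w₁ w₂ τ : ℝ) (P : Fin D → ℂ[X]) (x y : ℝ) :
    magDeriv (0, 1) 0 (trialFun b L s w₁ w₂ τ P) (x, y)
      = -Complex.I * (cutoff w₁ L x * fourierSum L D
          ((cutoff w₂ s (y - τ) : ℂ) • modeProfile b L (fun l => oscillatorDeriv b (P l)) y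
            + ((deriv (cutoff w₂ s) (y - τ) : ℝ) : ℂ) • modeProfile b L P y)
          (x : AddCircle L)) := by
  have h_fourier : HasDerivAt (fun y => fourierSum L D (modeProfile b L P y) (x : AddCircle L))
      (fourierSum L D (modeProfile b L (fun l => oscillatorDeriv b (P l)) y) (x : AddCircle L))
      y := by
    simp only [fourierSum_apply]
    exact HasDerivAt.fun_sum fun l _ =>
      (hasDerivAt_pi.mp (hasDerivAt_modeProfile b L P y) l).mul_const _
  have h_deriv := (((hasDerivAt_cutoff w₂ s (y - τ)).comp_sub_const y τ).ofReal_comp.fun_mul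
    h_fourier).const_mul (cutoff w₁ L x : ℂ)
  have h_dY := (hasDerivAt_dY (differentiable_trialFun b L s w₁ w₂ τ P) x y).unique h_deriv
  rw [magDeriv, ← dY, h_dY]
  simp only [map_add, map_smul, ContinuousMap.add_apply, ContinuousMap.smul_apply, smul_eq_mul,
    Pi.zero_apply, Complex.ofReal_zero, zero_mul, sub_zero]
  ring

end TrialFunctions

section TrialEnergy

open Polynomial

variable {b L s w₁ w₂ τ M : ℝ} {D : ℕ}

theorem integrable_sum_integral_fst {ι : Type*} (S : Finset ι) {f : ι → ℝ × ℝ → ℝ}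
    (hf : ∀ i, Integrable (f i)) : Integrable fun y => ∑ i ∈ S, ∫ x, f i (x, y) :=
  integrable_finsetSum _ fun i _ => (hf i).integral_prod_right

theorem sum_integral_eq_integral_sum_fst {ι : Type*} (S : Finset ι) {f : ι → ℝ × ℝ → ℝ}
    (hf : ∀ i, Integrable (f i)) :
    ∑ i ∈ S, ∫ p, f i p = ∫ y, ∑ i ∈ S, ∫ x, f i (x, y) := by
  rw [integral_finsetSum _ fun i _ => (hf i).integral_prod_right]
  exact Finset.sum_congr rfl fun i _ => integral_prod_symm _ (hf i)

theorem integral_norm_magDeriv_fst_trialFun_sq_le (hb : b ≠ 0) (hw₁ : 0 < w₁) (hw₁L : w₁ ≤ L)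
    (hM : ∀ t, |deriv transitionAngle t| ≤ M) (P : Fin D → ℂ[X]) (y : ℝ) :
    ∫ x, ‖magDeriv (1, 0) (fun p => b * p.2) (trialFun b L s w₁ w₂ τ P) (x, y)‖ ^ 2
      ≤ cutoff w₂ s (y - τ) ^ 2 * (L * ∑ l, (b ^ 2 * ‖modeProfile b L (fun l => X * P l) y l‖ ^ 2
          + (M / w₁) ^ 2 * ‖modeProfile b L P y l‖ ^ 2)) := by
  simp only [magDeriv_fst_trialFun hb]
  refine (integral_norm_cutoff_mul_fourierSum_add_sq_le hw₁ hw₁L hM _ _).trans (le_of_eq ?_)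
  simp only [Pi.smul_apply, smul_eq_mul, norm_mul, norm_neg, Complex.norm_I, Complex.norm_real,
    norm_eq_abs, mul_pow, sq_abs, one_mul, mul_left_comm _ L, Finset.mul_sum]
  exact Finset.sum_congr rfl fun l _ => by ring

theorem integral_norm_magDeriv_snd_trialFun_sq (hw₁ : 0 < w₁) (hw₁L : w₁ ≤ L)
    (P : Fin D → ℂ[X]) (y : ℝ) :
    ∫ x, ‖magDeriv (0, 1) 0 (trialFun b L s w₁ w₂ τ P) (x, y)‖ ^ 2
      = L * ∑ l, ‖(cutoff w₂ s (y - τ) : ℂ) * modeProfile b L (fun l => oscillatorDeriv b (P l)) y l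
          + ((deriv (cutoff w₂ s) (y - τ) : ℝ) : ℂ) * modeProfile b L P y l‖ ^ 2 := by
  simp only [magDeriv_snd_trialFun, norm_mul, norm_neg, Complex.norm_I, Complex.norm_real,
    norm_eq_abs, mul_pow, sq_abs, one_mul]
  exact integral_cutoff_sq_mul_norm_fourierSum_sq hw₁ hw₁L _

theorem integral_norm_trialFun_sq_fst (hw₁ : 0 < w₁) (hw₁L : w₁ ≤ L) (P : Fin D → ℂ[X]) (y : ℝ) :
    ∫ x, ‖trialFun b L s w₁ w₂ τ P (x, y)‖ ^ 2
      = cutoff w₂ s (y - τ) ^ 2 * (L * ∑ l, ‖modeProfile b L P y l‖ ^ 2) := by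
  simp only [trialFun, norm_mul, Complex.norm_real, norm_eq_abs, mul_pow, sq_abs,
    mul_left_comm (cutoff w₁ L _ ^ 2), integral_const_mul]
  rw [integral_cutoff_sq_mul_norm_fourierSum_sq hw₁ hw₁L]

theorem sum_integral_norm_magDeriv_fst_trialFun_sq_le (hb : 0 < b) (hw₁ : 0 < w₁) (hw₁L : w₁ ≤ L)
    (hw₂ : 0 < w₂) (hw₂s : w₂ ≤ s) (hM : ∀ t, |deriv transitionAngle t| ≤ M) (m : ℕ) (τ : ℝ)
    (P : Fin D → ℂ[X]) :
    ∑ j ∈ Finset.range m,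
        ∫ p, ‖magDeriv (1, 0) (fun p => b * p.2) (trialFun b L s w₁ w₂ (τ + j * s) P) p‖ ^ 2
      ≤ L * ∑ l, (b ^ 2 * gaussianNormSq b (X * P l) + (M / w₁) ^ 2 * gaussianNormSq b (P l)) := by
  have hL : 0 ≤ L := hw₁.le.trans hw₁L
  have h_int (j : ℕ) := (isTestOn_trialFun hw₁ hw₂ b L s (τ + j * s) P).integrable_norm_magDeriv_sq
    (1, 0) (a := fun p => b * p.2) (by fun_prop)
  rw [sum_integral_eq_integral_sum_fst _ h_int,
    ← integral_sum_norm_modeProfile_sq hb L _ _ (fun l => X * P l)]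
  refine integral_mono (integrable_sum_integral_fst _ h_int)
    (integrable_sum_norm_modeProfile_sq hb L _ _ _ _) fun y => ?_
  refine (Finset.sum_le_sum fun j _ =>
    integral_norm_magDeriv_fst_trialFun_sq_le hb.ne' hw₁ hw₁L hM P y).trans ?_
  rw [← Finset.sum_mul]
  simp only [← sub_sub]
  exact mul_le_of_le_one_left (by positivity) (sum_cutoff_sq_le_one hw₂ hw₂s m _)

theorem sum_integral_norm_magDeriv_snd_trialFun_sq_le (hb : 0 < b) (hw₁ : 0 < w₁) (hw₁L : w₁ ≤ L)
    (hw₂ : 0 < w₂) (hw₂s : w₂ ≤ s) (hM : ∀ t, |deriv transitionAngle t| ≤ M) (m : ℕ) (τ : ℝ)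
    (P : Fin D → ℂ[X]) :
    ∑ j ∈ Finset.range m,
        ∫ p, ‖magDeriv (0, 1) 0 (trialFun b L s w₁ w₂ (τ + j * s) P) p‖ ^ 2
      ≤ L * ∑ l, (1 * gaussianNormSq b (oscillatorDeriv b (P l))
          + (M / w₂) ^ 2 * gaussianNormSq b (P l)) := by
  have hL : 0 ≤ L := hw₁.le.trans hw₁L
  have h_int (j : ℕ) := (isTestOn_trialFun hw₁ hw₂ b L s (τ + j * s) P).integrable_norm_magDeriv_sq
    (0, 1) (a := 0) continuous_zero
  rw [sum_integral_eq_integral_sum_fst _ h_int,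
    ← integral_sum_norm_modeProfile_sq hb L _ _ (fun l => oscillatorDeriv b (P l))]
  refine integral_mono (integrable_sum_integral_fst _ h_int)
    (integrable_sum_norm_modeProfile_sq hb L _ _ _ _) fun y => ?_
  simp only [integral_norm_magDeriv_snd_trialFun_sq hw₁ hw₁L, ← sub_sub, one_mul]
  rw [← Finset.mul_sum, Finset.sum_comm]
  gcongr with l
  exact sum_norm_cutoff_mul_add_deriv_sq_le hw₂ hw₂s hM m _ _ _

theorem sum_qb_magTranslate_trialFun_le (hb : 0 < b) (hw₁ : 0 < w₁) (hw₁L : w₁ ≤ L)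
    (hw₂ : 0 < w₂) (hw₂s : w₂ ≤ s) (hM : ∀ t, |deriv transitionAngle t| ≤ M) (m : ℕ) (τ : ℝ)
    (a : ℕ → ℝ × ℝ) (P : Fin D → ℂ[X]) :
    ∑ j ∈ Finset.range m, qb b (magTranslate b (a j) (trialFun b L s w₁ w₂ (τ + j * s) P))
      ≤ L * ∑ l, (oscillatorEnergy b (P l)
          + ((M / w₁) ^ 2 + (M / w₂) ^ 2) * gaussianNormSq b (P l)) := by
  have h_test (j : ℕ) := isTestOn_trialFun hw₁ hw₂ b L s (τ + j * s) P
  have h_split (j : ℕ) := integral_add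
    ((h_test j).integrable_norm_magDeriv_sq (1, 0) (a := fun p => b * p.2) (by fun_prop))
    ((h_test j).integrable_norm_magDeriv_sq (0, 1) (a := 0) continuous_zero)
  simp only [qb_magTranslate b _ (h_test _).differentiable, h_split, Finset.sum_add_distrib]
  refine (add_le_add
    (sum_integral_norm_magDeriv_fst_trialFun_sq_le hb hw₁ hw₁L hw₂ hw₂s hM m τ P)
    (sum_integral_norm_magDeriv_snd_trialFun_sq_le hb hw₁ hw₁L hw₂ hw₂s hM m τ P)).trans_eq ?_
  simp only [oscillatorEnergy, add_mul, one_mul, Finset.sum_add_distrib]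
  ring

theorem guidingCenter_nonneg (hb : 0 ≤ b) (hL : 0 ≤ L) (l : ℕ) : 0 ≤ guidingCenter b L l := by
  unfold guidingCenter
  positivity

/-- Within distance `A` of the guiding centre the cutoffs sum to one; further away the left-hand
side is not positive. -/
theorem one_sub_div_sq_le_sum_cutoff_sq {A y c : ℝ} {m : ℕ} (hw₂ : 0 < w₂) (hw₂s : w₂ ≤ s)
    (hA : 0 < A) (hc : 0 ≤ c) (hcm : c + 2 * A + s ≤ m * s) :
    1 - (y - c) ^ 2 / A ^ 2
      ≤ ∑ j ∈ Finset.range m, cutoff w₂ s (y - (-(s + A) + j * s)) ^ 2 := by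
  simp only [← sub_sub]
  rcases le_or_gt |y - c| A with h_near | h_far
  · obtain ⟨h_lower, h_upper⟩ := abs_le.mp h_near
    rw [sum_cutoff_sq_eq_one hw₂ hw₂s (by linarith) (by linarith)]
    exact sub_le_self _ (by positivity)
  · refine le_trans ?_ (Finset.sum_nonneg fun j _ => sq_nonneg _)
    rw [sub_nonpos, one_le_div (by positivity), ← sq_abs (y - c)]
    exact pow_le_pow_left₀ hA.le h_far.le 2

theorem norm_modeProfile_X_mul (P : Fin D → ℂ[X]) (y : ℝ) (l : Fin D) :
    ‖modeProfile b L (fun l => X * P l) y l‖ ^ 2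
      = (y - guidingCenter b L l) ^ 2 * ‖modeProfile b L P y l‖ ^ 2 := by
  rw [modeProfile, polyGaussian_X_mul, norm_mul, Complex.norm_real, norm_eq_abs, mul_pow, sq_abs]
  rfl

theorem le_sum_integral_norm_trialFun_sq {A : ℝ} {m : ℕ} (hb : 0 < b) (hw₁ : 0 < w₁)
    (hw₁L : w₁ ≤ L) (hw₂ : 0 < w₂) (hw₂s : w₂ ≤ s) (hA : 0 < A)
    (hm : ∀ l : Fin D, guidingCenter b L l + 2 * A + s ≤ m * s) (P : Fin D → ℂ[X]) :
    L * ∑ l, (gaussianNormSq b (P l) - gaussianNormSq b (X * P l) / A ^ 2)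
      ≤ ∑ j ∈ Finset.range m, ∫ p, ‖trialFun b L s w₁ w₂ (-(s + A) + j * s) P p‖ ^ 2 := by
  have hL : 0 ≤ L := hw₁.le.trans hw₁L
  have h_int (j : ℕ) := (isTestOn_trialFun hw₁ hw₂ b L s (-(s + A) + j * s) P).memLp
    |>.integrable_norm_pow two_ne_zero
  have h_shape (l) : gaussianNormSq b (P l) - gaussianNormSq b (X * P l) / A ^ 2
      = 1 * gaussianNormSq b (P l) + -(1 / A ^ 2) * gaussianNormSq b (X * P l) := by ring
  simp only [h_shape]
  rw [sum_integral_eq_integral_sum_fst _ h_int,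
    ← integral_sum_norm_modeProfile_sq hb L _ _ _ (fun l => X * P l)]
  refine integral_mono (integrable_sum_norm_modeProfile_sq hb L _ _ _ _)
    (integrable_sum_integral_fst _ h_int) fun y => ?_
  simp only [integral_norm_trialFun_sq_fst hw₁ hw₁L, ← Finset.sum_mul]
  rw [mul_left_comm]
  refine mul_le_mul_of_nonneg_left ?_ hL
  rw [Finset.mul_sum]
  gcongr with l
  rw [norm_modeProfile_X_mul]
  calc 1 * ‖modeProfile b L P y l‖ ^ 2
        + -(1 / A ^ 2) * ((y - guidingCenter b L l) ^ 2 * ‖modeProfile b L P y l‖ ^ 2)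
      = (1 - (y - guidingCenter b L l) ^ 2 / A ^ 2) * ‖modeProfile b L P y l‖ ^ 2 := by ring
    _ ≤ _ := by
      gcongr
      exact one_sub_div_sq_le_sum_cutoff_sq hw₂ hw₂s hA (guidingCenter_nonneg hb.le hL l) (hm l)

end TrialEnergy

section LowerBound

open Polynomial

variable {b L s w₁ w₂ M lam R₁ R₂ : ℝ} {n D : ℕ}

theorem gaussianNormSq_X_mul_le (hb : 0 < b) {P : ℂ[X]} (hP : P.natDegree ≤ n) :
    gaussianNormSq b (X * P) ≤ (2 * n + 1) / b * gaussianNormSq b P := by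
  have h_energy : b ^ 2 * gaussianNormSq b (X * P) ≤ (2 * n + 1) * b * gaussianNormSq b P :=
    (le_add_of_nonneg_left (gaussianNormSq_nonneg b _)).trans (oscillatorEnergy_le hb hP)
  rw [div_mul_eq_mul_div, le_div_iff₀ hb]
  refine le_of_mul_le_mul_left ?_ hb
  linarith

theorem sum_oscillatorEnergy_add_lt {A κ : ℝ} (hb : 0 < b) (hlam : 0 < lam)
    (hκ : (2 * n + 1) * b + κ < lam * (1 - (2 * n + 1) / (b * A ^ 2))) {P : Fin D → ℂ[X]}
    (hP : ∀ l, (P l).natDegree ≤ n) (hP0 : P ≠ 0) :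
    ∑ l, (oscillatorEnergy b (P l) + κ * gaussianNormSq b (P l))
      < lam * ∑ l, (gaussianNormSq b (P l) - gaussianNormSq b (X * P l) / A ^ 2) := by
  have h_pos : 0 < ∑ l, gaussianNormSq b (P l) := by
    obtain ⟨l, hl⟩ := Function.ne_iff.mp hP0
    exact Finset.sum_pos' (fun l _ => gaussianNormSq_nonneg b _)
      ⟨l, Finset.mem_univ _, gaussianNormSq_pos hb hl⟩
  have h_energy (l : Fin D) : oscillatorEnergy b (P l) + κ * gaussianNormSq b (P l)
      ≤ ((2 * n + 1) * b + κ) * gaussianNormSq b (P l) := by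
    linarith [oscillatorEnergy_le hb (hP l)]
  have h_mass (l : Fin D) : (1 - (2 * n + 1) / (b * A ^ 2)) * gaussianNormSq b (P l)
      ≤ gaussianNormSq b (P l) - gaussianNormSq b (X * P l) / A ^ 2 := by
    have h := div_le_div_of_nonneg_right (gaussianNormSq_X_mul_le hb (hP l)) (sq_nonneg A)
    rw [mul_div_right_comm, div_div] at h
    linarith
  calc ∑ l, (oscillatorEnergy b (P l) + κ * gaussianNormSq b (P l))
      ≤ ((2 * n + 1) * b + κ) * ∑ l, gaussianNormSq b (P l) := by
        rw [Finset.mul_sum]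
        exact Finset.sum_le_sum fun l _ => h_energy l
    _ < lam * (1 - (2 * n + 1) / (b * A ^ 2)) * ∑ l, gaussianNormSq b (P l) := by gcongr
    _ ≤ _ := by
        rw [mul_assoc, Finset.mul_sum]
        gcongr with l
        exact h_mass l

/-- The trial functions with polynomial amplitudes of degree at most `n`, recentred at the origin
and put in the symmetric gauge, as a linear family. -/
def trialFamily (b L s w₁ w₂ : ℝ) (n D : ℕ) (τ : ℝ) :
    (Fin D → degreeLT ℂ (n + 1)) →ₗ[ℂ] ℝ × ℝ → ℂ where
  toFun c := magTranslate b ((L + w₁) / 2, τ + (s + w₂) / 2)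
    (trialFun b L s w₁ w₂ τ fun l => (c l : ℂ[X]))
  map_add' c d := by
    ext p
    simp only [magTranslate, trialFun, fourierSum_apply, modeProfile, polyGaussian, Pi.add_apply,
      Submodule.coe_add, eval_add, add_mul, Finset.sum_add_distrib, mul_add]
  map_smul' a c := by
    ext p
    simp only [magTranslate, trialFun, fourierSum_apply, modeProfile, polyGaussian, Pi.smul_apply,
      Submodule.coe_smul, eval_smul, smul_eq_mul, RingHom.id_apply, Finset.mul_sum]
    exact Finset.sum_congr rfl fun l _ => by ring

theorem isTestOn_trialFamily (hw₁ : 0 < w₁) (hw₂ : 0 < w₂) (hR₁ : L + w₁ < R₁) (hR₂ : s + w₂ < R₂)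
    (b τ : ℝ) (c : Fin D → degreeLT ℂ (n + 1)) :
    IsTestOn (rectR R₁ R₂) (trialFamily b L s w₁ w₂ n D τ c) := by
  refine isTestOn_magTranslate (isTestOn_trialFun hw₁ hw₂ b L s τ _) b ?_
  rintro ⟨x, y⟩ ⟨⟨hx0, hx1⟩, hy0, hy1⟩
  simp only [Prod.mk_add_mk] at hx0 hx1 hy0 hy1
  exact ⟨⟨by linarith, by linarith⟩, by linarith, by linarith⟩

theorem isBounded_rectR (R₁ R₂ : ℝ) : Bornology.IsBounded (rectR R₁ R₂) :=
  (Metric.isBounded_Ioo _ _).prod (Metric.isBounded_Ioo _ _)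

theorem natDegree_le_of_mem_degreeLT {P : ℂ[X]} (hP : P ∈ degreeLT ℂ (n + 1)) :
    P.natDegree ≤ n :=
  natDegree_le_iff_coeff_eq_zero.mpr fun k hk =>
    coeff_eq_zero_of_degree_lt ((mem_degreeLT.mp hP).trans_le (by exact_mod_cast hk))

theorem finrank_pi_degreeLT (D k : ℕ) :
    Module.finrank ℂ (Fin D → degreeLT ℂ k) = D * k := by
  have : FiniteDimensional ℂ (degreeLT ℂ k) := (degreeLTEquiv ℂ k).symm.finiteDimensional
  simp [Module.finrank_pi_fintype, (degreeLTEquiv ℂ k).finrank_eq]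

theorem mul_le_mul_NNb_rectR {A : ℝ} {m : ℕ} (hb : 0 < b) (hlam : 0 < lam) (hw₁ : 0 < w₁)
    (hw₁L : w₁ ≤ L) (hw₂ : 0 < w₂) (hw₂s : w₂ ≤ s) (hM : ∀ t, |deriv transitionAngle t| ≤ M)
    (hR₁ : L + w₁ < R₁) (hR₂ : s + w₂ < R₂) (hA : 0 < A)
    (hn : (2 * n + 1) * b + ((M / w₁) ^ 2 + (M / w₂) ^ 2)
      < lam * (1 - (2 * n + 1) / (b * A ^ 2)))
    (hm : ∀ l : Fin D, guidingCenter b L l + 2 * A + s ≤ m * s) :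
    D * (n + 1) ≤ m * NNb b lam (rectR R₁ R₂) := by
  have h_family : ∀ c ≠ 0,
      ∑ j : Fin m, qb b (trialFamily b L s w₁ w₂ n D (-(s + A) + j * s) c)
        < lam * ∑ j : Fin m,
          ∫ p, ‖trialFamily b L s w₁ w₂ n D (-(s + A) + j * s) c p‖ ^ 2 := by
    intro c hc
    let P (l : Fin D) : ℂ[X] := c l
    have hP0 : P ≠ 0 := fun h => hc (funext fun l => Subtype.ext (congrFun h l))
    have h_energy := sum_qb_magTranslate_trialFun_le hb hw₁ hw₁L hw₂ hw₂s hM m (-(s + A))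
      (fun j => ((L + w₁) / 2, -(s + A) + j * s + (s + w₂) / 2)) P
    have h_mass := le_sum_integral_norm_trialFun_sq hb hw₁ hw₁L hw₂ hw₂s hA hm P
    rw [Finset.sum_range] at h_energy h_mass
    have h_lt := sum_oscillatorEnergy_add_lt hb hlam hn
      (fun l => natDegree_le_of_mem_degreeLT (c l).2) hP0
    simp only [trialFamily, LinearMap.coe_mk, AddHom.coe_mk, integral_norm_magTranslate_sq]
    calc _ ≤ _ := h_energy
      _ < L * (lam * _) := mul_lt_mul_of_pos_left h_lt (hw₁.trans_le hw₁L)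
      _ = lam * (L * _) := mul_left_comm _ _ _
      _ ≤ lam * _ := mul_le_mul_of_nonneg_left h_mass hlam.le
  have h := finrank_le_card_mul_NNb (bddAbove_negativeDims (isBounded_rectR R₁ R₂))
    (fun _ c => isTestOn_trialFamily hw₁ hw₂ hR₁ hR₂ b _ c) h_family
  rwa [finrank_pi_degreeLT, Fintype.card_fin] at h

theorem le_of_forall_nat_mul_le_add {k β γ : ℝ} (h : ∀ D : ℕ, D * k ≤ D * β + γ) : k ≤ β := by
  by_contra! h_lt
  obtain ⟨D, hD⟩ := exists_nat_gt (γ / (k - β))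
  rw [div_lt_iff₀ (sub_pos.mpr h_lt)] at hD
  linarith [h D]

theorem exists_pos_lt_mul_one_sub_div {e c : ℝ} (hb : 0 < b) (he : e < lam) :
    ∃ A > 0, e < lam * (1 - c / (b * A ^ 2)) := by
  have h_atTop : Tendsto (fun A : ℝ => b * A ^ 2) atTop atTop :=
    (tendsto_pow_atTop two_ne_zero).const_mul_atTop hb
  have h_lim : Tendsto (fun A : ℝ => lam * (1 - c / (b * A ^ 2))) atTop (nhds (lam * (1 - 0))) :=
    (tendsto_const_nhds.sub (tendsto_const_nhds.div_atTop h_atTop)).const_mul lam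
  rw [sub_zero, mul_one] at h_lim
  exact ((eventually_gt_atTop 0).and (h_lim.eventually_const_lt he)).exists

theorem exists_nat_guidingCenter_le {A : ℝ} (hb : 0 < b) (hL : 0 < L) (hs : 0 < s) (hA : 0 < A)
    (D : ℕ) : ∃ m : ℕ, (∀ l : Fin D, guidingCenter b L l + 2 * A + s ≤ m * s) ∧
      m ≤ (guidingCenter b L D + 2 * A) / s + 2 := by
  have h_center := guidingCenter_nonneg hb.le hL.le
  refine ⟨⌈(guidingCenter b L D + 2 * A) / s⌉₊ + 1, fun l => ?_, ?_⟩
  · have h_mono : guidingCenter b L l ≤ guidingCenter b L D := by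
      unfold guidingCenter
      gcongr
      exact l.2.le
    have h_ceil := (div_le_iff₀ hs).mp (Nat.le_ceil ((guidingCenter b L D + 2 * A) / s))
    push_cast
    linarith
  · have h_nonneg : 0 ≤ (guidingCenter b L D + 2 * A) / s :=
      div_nonneg (by linarith [h_center D]) hs.le
    push_cast
    linarith [Nat.ceil_lt_add_one h_nonneg]

theorem landau_density_mul_le_NNb (hb : 0 < b) (hw₁ : 0 < w₁) (hw₁L : w₁ ≤ L) (hw₂ : 0 < w₂)
    (hw₂s : w₂ ≤ s) (hM : ∀ t, |deriv transitionAngle t| ≤ M) (hR₁ : L + w₁ < R₁)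
    (hR₂ : s + w₂ < R₂) (hn : (2 * n + 1) * b + ((M / w₁) ^ 2 + (M / w₂) ^ 2) < lam) :
    b * (L * s) / (2 * π) * (n + 1) ≤ NNb b lam (rectR R₁ R₂) := by
  have hL : 0 < L := hw₁.trans_le hw₁L
  have hs : 0 < s := hw₂.trans_le hw₂s
  have hlam : 0 < lam := lt_of_le_of_lt (by positivity) hn
  obtain ⟨A, hA, hnA⟩ := exists_pos_lt_mul_one_sub_div (c := 2 * n + 1) hb hn
  set N := NNb b lam (rectR R₁ R₂)
  have h_count (D : ℕ) :
      D * (n + 1 : ℝ) ≤ D * (2 * π / (b * (L * s)) * N) + (2 * A / s + 2) * N := by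
    obtain ⟨m, hm, hm_le⟩ := exists_nat_guidingCenter_le hb hL hs hA D
    calc D * (n + 1 : ℝ) ≤ m * N := by
          exact_mod_cast
            mul_le_mul_NNb_rectR hb hlam hw₁ hw₁L hw₂ hw₂s hM hR₁ hR₂ hA hnA hm
      _ ≤ ((guidingCenter b L D + 2 * A) / s + 2) * N := by gcongr
      _ = _ := by
          rw [guidingCenter]
          field_simp
          ring
  have h_limit := le_of_forall_nat_mul_le_add h_count
  rwa [← inv_div, ← div_eq_inv_mul, le_div_iff₀' (by positivity)] at h_limit

theorem lt_of_landauCount_eq_succ {μ : ℝ} (hb : 0 < b) (hn : landauCount b μ = n + 1) :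
    (2 * n + 1) * b < μ := by
  by_contra! h_le
  have h_sub : {k : ℕ | (2 * (k : ℝ) + 1) * b < μ} ⊆ (Finset.range n : Set ℕ) := by
    intro k hk
    rw [Finset.coe_range, Set.mem_Iio]
    by_contra! hnk
    refine (hk.trans_le h_le).not_ge ?_
    gcongr
  have h_card := Set.ncard_le_ncard h_sub (Finset.finite_toSet _)
  rw [Set.ncard_coe_finset, Finset.card_range] at h_card
  change Set.ncard _ = n + 1 at hn
  omega

theorem landau_density_mul_le_NNb_of_le_half {ε : ℝ} (hM : ∀ t, |deriv transitionAngle t| ≤ M)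
    (hb : 0 < b) (hR₁ : 0 < R₁) (hR₂ : 0 < R₂) (hε : 0 < ε) (hε_half : ε ≤ 1 / 2)
    (hn : (2 * n + 1) * b + 8 * M ^ 2 / (ε * min R₁ R₂) ^ 2 < lam) :
    (1 - ε) ^ 2 * (b * (R₁ * R₂) / (2 * π)) * (n + 1) ≤ NNb b lam (rectR R₁ R₂) := by
  have : 0 < min R₁ R₂ := lt_min hR₁ hR₂
  have h_loc {R : ℝ} (hR : min R₁ R₂ ≤ R) :
      (M / (ε * R / 2)) ^ 2 ≤ 4 * M ^ 2 / (ε * min R₁ R₂) ^ 2 := by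
    have h_eq : (M / (ε * R / 2)) ^ 2 = 4 * M ^ 2 / (ε * R) ^ 2 := by
      rw [div_div_eq_mul_div, div_pow]
      ring
    rw [h_eq]
    gcongr
  have h_width {R : ℝ} (hR : 0 < R) : ε * R / 2 ≤ (1 - ε) * R := by
    linarith [mul_le_mul_of_nonneg_right hε_half hR.le]
  have h_fit {R : ℝ} (hR : 0 < R) : (1 - ε) * R + ε * R / 2 < R := by linarith [mul_pos hε hR]
  have h := landau_density_mul_le_NNb (lam := lam) (n := n) hb (by positivity) (h_width hR₁)
    (by positivity) (h_width hR₂) hM (h_fit hR₁) (h_fit hR₂) (by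
      have h_double : 8 * M ^ 2 / (ε * min R₁ R₂) ^ 2
          = 2 * (4 * M ^ 2 / (ε * min R₁ R₂) ^ 2) := by ring
      linarith [h_loc (min_le_left R₁ R₂), h_loc (min_le_right R₁ R₂)])
  refine le_trans (le_of_eq ?_) h
  ring

theorem landau_rectangle_lower_bound_general :
    ∃ C₀ > 0, ∀ b lam R₁ R₂ : ℝ, 0 < b → 0 < R₁ → 0 < R₂ →
      ∀ ε : ℝ, 0 < ε → ε ≤ 1 →
        (1 - ε) ^ 2 * (b * (R₁ * R₂) / (2 * π)) *
            (landauCount b (lam - C₀ / (ε * min R₁ R₂) ^ 2) : ℝ)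
          ≤ (NNb b lam (rectR R₁ R₂) : ℝ) := by
  obtain ⟨M, hM_pos, hM⟩ := exists_abs_deriv_transitionAngle_le
  refine ⟨32 * M ^ 2, by positivity, fun b lam R₁ R₂ hb hR₁ hR₂ ε hε hε_one => ?_⟩
  have : 0 < min R₁ R₂ := lt_min hR₁ hR₂
  rcases h_level : landauCount b (lam - 32 * M ^ 2 / (ε * min R₁ R₂) ^ 2) with _ | n
  · simp
  have hn := lt_of_landauCount_eq_succ hb h_level
  rw [Nat.cast_succ]
  -- For `ε > 1/2` the bound at `1/2` suffices.
  set δ := min ε (1 / 2)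
  have hδ : 0 < δ := lt_min hε one_half_pos
  have hεδ : ε ≤ 2 * δ := by
    rw [mul_min_of_nonneg _ _ zero_le_two]
    exact le_min (by linarith) (by linarith)
  calc (1 - ε) ^ 2 * (b * (R₁ * R₂) / (2 * π)) * (n + 1 : ℝ)
      ≤ (1 - δ) ^ 2 * (b * (R₁ * R₂) / (2 * π)) * (n + 1 : ℝ) := by
        gcongr
        exact min_le_left _ _
    _ ≤ (NNb b lam (rectR R₁ R₂) : ℝ) := by
        refine landau_density_mul_le_NNb_of_le_half hM hb hR₁ hR₂ hδ (min_le_right _ _) ?_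
        have h_loc : 8 * M ^ 2 / (δ * min R₁ R₂) ^ 2 ≤ 32 * M ^ 2 / (ε * min R₁ R₂) ^ 2 := by
          calc 8 * M ^ 2 / (δ * min R₁ R₂) ^ 2 = 32 * M ^ 2 / (2 * δ * min R₁ R₂) ^ 2 := by
                field_simp
                norm_num
            _ ≤ 32 * M ^ 2 / (ε * min R₁ R₂) ^ 2 := by gcongr
        linarith

end LowerBound

/-- refined Colin de Verdière lower bound on a rectangle. -/
theorem landau_rectangle_lower_bound :
    ∃ C₀ > 0, ∀ b lam R₁ R₂ : ℝ, 0 < b → b < lam →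
      1 ≤ Real.sqrt b * min R₁ R₂ →
      ∀ ε : ℝ, 0 < ε → ε ≤ 1 →
        (1 - ε) ^ 2 * (b * (R₁ * R₂) / (2 * π)) *
            (landauCount b (lam - C₀ / (ε * min R₁ R₂) ^ 2) : ℝ)
          ≤ (NNb b lam (rectR R₁ R₂) : ℝ) := by
  obtain ⟨C₀, hC₀, h⟩ := landau_rectangle_lower_bound_general
  refine ⟨C₀, hC₀, fun b lam R₁ R₂ hb _ hR => ?_⟩
  have hr := lt_min_iff.mp (pos_of_mul_pos_right (zero_lt_one.trans_le hR) (sqrt_nonneg b))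
  exact h b lam R₁ R₂ hb hr.1 hr.2
end
end

section
/- For every b ∈ ℝ and every f ∈ C₀^∞((0,∞); ℂ): ∫₀^∞ ( (y - b)² |f(y)|² + y² |f'(y)|² ) dy ≥ b ∫₀^∞ |f(y)|² dy. (Equivalently, the fibered operator P_b(1) is bounded below by b.) -/
open MeasureTheory Real Filter

noncomputable section

/-!
Write `K* f = (y - b + 1) f + y f'`. Expanding `‖K* f‖²` produces the cross term
`y (y - b + 1) (‖f‖²)'`, which integrates by parts to `-(2y - b + 1) ‖f‖²`; the boundary term
vanishes because the weight `y (y - b + 1)` does so at `y = 0`. Since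
`(y - b + 1)² - (2y - b + 1) = (y - b)² - b`, the quadratic form minus `b ∫ ‖f‖²` is `∫ ‖K* f‖²`.
-/

section WeightedNormSq

variable {E : Type*} [NormedAddCommGroup E] {w : ℝ → ℝ} {f : ℝ → E}

theorem hasCompactSupport_mul_norm_sq (w : ℝ → ℝ) (hsupp : HasCompactSupport f) :
    HasCompactSupport (fun y => w y * ‖f y‖ ^ 2) :=
  (hsupp.comp_left (g := fun x : E => ‖x‖ ^ 2) (by simp)).mul_left

theorem integrable_mul_norm_sq_of_hasCompactSupport (hw : Continuous w) (hf : Continuous f)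
    (hsupp : HasCompactSupport f) : Integrable (fun y => w y * ‖f y‖ ^ 2) :=
  Continuous.integrable_of_hasCompactSupport (by fun_prop) (hasCompactSupport_mul_norm_sq w hsupp)

variable [InnerProductSpace ℝ E]

theorem norm_smul_add_smul_sq (s t : ℝ) (x y : E) :
    ‖s • x + t • y‖ ^ 2 = s ^ 2 * ‖x‖ ^ 2 + s * t * (2 * inner ℝ x y) + t ^ 2 * ‖y‖ ^ 2 := by
  rw [norm_add_sq_real, norm_smul, norm_smul, real_inner_smul_left, real_inner_smul_right,
    mul_pow, mul_pow, Real.norm_eq_abs, Real.norm_eq_abs, sq_abs, sq_abs]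
  ring

theorem deriv_mul_norm_sq {y : ℝ} (hw : DifferentiableAt ℝ w y) (hf : DifferentiableAt ℝ f y) :
    deriv (fun y => w y * ‖f y‖ ^ 2) y =
      deriv w y * ‖f y‖ ^ 2 + w y * (2 * inner ℝ (f y) (deriv f y)) :=
  (hw.hasDerivAt.mul hf.hasDerivAt.norm_sq).deriv

theorem integral_Ioi_norm_smul_add_smul_deriv_sq {α β : ℝ → ℝ} (hα : Continuous α)
    (hβ : Continuous β) (hαβ : ContDiff ℝ 1 (fun y => α y * β y)) (hf : ContDiff ℝ 1 f)
    (hsupp : HasCompactSupport f) (a : ℝ) :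
    ∫ y in Set.Ioi a, ‖α y • f y + β y • deriv f y‖ ^ 2 =
      (∫ y in Set.Ioi a, ((α y ^ 2 - deriv (fun y => α y * β y) y) * ‖f y‖ ^ 2 +
        β y ^ 2 * ‖deriv f y‖ ^ 2)) - α a * β a * ‖f a‖ ^ 2 := by
  have hf' : Continuous (deriv f) := hf.continuous_deriv le_rfl
  have contDiff_boundary : ContDiff ℝ 1 (fun y => α y * β y * ‖f y‖ ^ 2) :=
    hαβ.mul (hf.norm_sq ℝ)
  have hasCompactSupport_boundary : HasCompactSupport (fun y => α y * β y * ‖f y‖ ^ 2) :=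
    hasCompactSupport_mul_norm_sq _ hsupp
  have norm_sq_expansion (y : ℝ) : ‖α y • f y + β y • deriv f y‖ ^ 2 =
      ((α y ^ 2 - deriv (fun y => α y * β y) y) * ‖f y‖ ^ 2 + β y ^ 2 * ‖deriv f y‖ ^ 2) +
        deriv (fun y => α y * β y * ‖f y‖ ^ 2) y := by
    rw [norm_smul_add_smul_sq, deriv_mul_norm_sq (hαβ.differentiable one_ne_zero y)
      (hf.differentiable one_ne_zero y)]
    ring
  have integrable_form : Integrable (fun y =>
      (α y ^ 2 - deriv (fun y => α y * β y) y) * ‖f y‖ ^ 2 + β y ^ 2 * ‖deriv f y‖ ^ 2) :=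
    (integrable_mul_norm_sq_of_hasCompactSupport
      ((hα.pow 2).sub (hαβ.continuous_deriv le_rfl)) hf.continuous hsupp).add
      (integrable_mul_norm_sq_of_hasCompactSupport (hβ.pow 2) hf' hsupp.deriv)
  have integrable_deriv : Integrable (deriv fun y => α y * β y * ‖f y‖ ^ 2) :=
    (contDiff_boundary.continuous_deriv le_rfl).integrable_of_hasCompactSupport
      hasCompactSupport_boundary.deriv
  simp only [norm_sq_expansion]
  rw [integral_add integrable_form.integrableOn integrable_deriv.integrableOn,
    hasCompactSupport_boundary.integral_Ioi_deriv_eq contDiff_boundary, sub_eq_add_neg]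

end WeightedNormSq

section FiberOperator

variable {E : Type*} [NormedAddCommGroup E] [InnerProductSpace ℝ E] {f : ℝ → E}

/-- The first-order operator `K_b* f = (y - b) f + y f'`, whose shift to `b - 1` factorizes the
fibered operator as `P_b(1) - b = K_{b-1} K_{b-1}*`. It acts on functions on all of `ℝ`. -/
def ladderAdjoint (b : ℝ) (f : ℝ → E) (y : ℝ) : E :=
  (y - b) • f y + y • deriv f y

theorem integral_Ioi_norm_ladderAdjoint_sq (b : ℝ) (hf : ContDiff ℝ 1 f)
    (hsupp : HasCompactSupport f) :
    ∫ y in Set.Ioi (0 : ℝ), ‖ladderAdjoint (b - 1) f y‖ ^ 2 =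
      (∫ y in Set.Ioi (0 : ℝ), ((y - b) ^ 2 * ‖f y‖ ^ 2 + y ^ 2 * ‖deriv f y‖ ^ 2)) -
        b * ∫ y in Set.Ioi (0 : ℝ), ‖f y‖ ^ 2 := by
  have hf' : Continuous (deriv f) := hf.continuous_deriv le_rfl
  have deriv_weight (y : ℝ) : deriv (fun y => (y - (b - 1)) * y) y = 2 * y - b + 1 := by
    rw [(((hasDerivAt_id' y).sub_const (b - 1)).fun_mul (hasDerivAt_id' y)).deriv]
    ring
  have complete_square (y : ℝ) : ((y - (b - 1)) ^ 2 - (2 * y - b + 1)) * ‖f y‖ ^ 2 +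
      y ^ 2 * ‖deriv f y‖ ^ 2 =
        (y - b) ^ 2 * ‖f y‖ ^ 2 + y ^ 2 * ‖deriv f y‖ ^ 2 - b * ‖f y‖ ^ 2 := by
    ring
  have integrable_form :
      Integrable (fun y => (y - b) ^ 2 * ‖f y‖ ^ 2 + y ^ 2 * ‖deriv f y‖ ^ 2) :=
    (integrable_mul_norm_sq_of_hasCompactSupport (by fun_prop) hf.continuous hsupp).add
      (integrable_mul_norm_sq_of_hasCompactSupport (by fun_prop) hf' hsupp.deriv)
  have integrable_norm_sq : Integrable (fun y => b * ‖f y‖ ^ 2) :=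
    integrable_mul_norm_sq_of_hasCompactSupport continuous_const hf.continuous hsupp
  simp only [ladderAdjoint]
  rw [integral_Ioi_norm_smul_add_smul_deriv_sq (by fun_prop) continuous_id' (by fun_prop) hf hsupp]
  simp only [deriv_weight, complete_square, mul_zero, zero_mul, sub_zero]
  rw [integral_sub integrable_form.integrableOn integrable_norm_sq.integrableOn,
    integral_const_mul]

theorem fiber_operator_lower_bound_general (b : ℝ) (hf : ContDiff ℝ 1 f)
    (hsupp : HasCompactSupport f) :
    b * ∫ y in Set.Ioi (0 : ℝ), ‖f y‖ ^ 2 ≤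
      ∫ y in Set.Ioi (0 : ℝ), ((y - b) ^ 2 * ‖f y‖ ^ 2 + y ^ 2 * ‖deriv f y‖ ^ 2) := by
  rw [← sub_nonneg, ← integral_Ioi_norm_ladderAdjoint_sq b hf hsupp]
  exact integral_nonneg fun y => sq_nonneg _

end FiberOperator

/-- the quadratic form of the fibered operator `P_b(1)` is bounded
below by `b` : `∫ ((y-b)²|f|² + y²|f'|²) dy ≥ b ∫ |f|² dy` for test functions on
`(0,∞)`. -/
theorem fiber_operator_lower_bound (b : ℝ) (f : ℝ → ℂ)
    (hf : ContDiff ℝ (⊤ : ℕ∞) f) (hsupp : HasCompactSupport f)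
    (hpos : tsupport f ⊆ Set.Ioi (0 : ℝ)) :
    b * ∫ y in Set.Ioi (0 : ℝ), ‖f y‖ ^ 2 ≤
      ∫ y in Set.Ioi (0 : ℝ), ((y - b) ^ 2 * ‖f y‖ ^ 2 + y ^ 2 * ‖deriv f y‖ ^ 2) :=
  fiber_operator_lower_bound_general b (hf.of_le (by exact_mod_cast le_top)) hsupp
end
end
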